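/- Let N ≥ 1 and let α be a planar pair partition of {1,…,4N} containing no link of the form {2j−1,2j} for any j ∈ {1,…,2N}. Then the fused pure partition function Ẑ_α (given by the fusion limit, which exists) is an infinitely differentiable real-valued function on the chamber {y ∈ ℝ^{2N} : y_1<⋯<y_{2N}} and satisfies, for every j ∈ {1,…,2N} and at every point of the chamber, the third-order partial differential equation ∂³Ẑ_α/∂y_j³ − 4 Σ_{i≠j} ( (∂Ẑ_α/∂y_j)/(y_i−y_j)² − (∂²Ẑ_α/∂y_i∂y_j)/(y_i−y_j) ) + 2 Σ_{i≠j} ( 2Ẑ_α/(y_i−y_j)³ − (∂Ẑ_α/∂y_i)/(y_i−y_j)² ) = 0 (this is the κ=4, H=1 case of the PDE system). -/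

import Mathlib

/-!
The pure partition function is a combination of conformal blocks whose coefficients, the entries of
the inverse incidence matrix, are here indexed by sign sequences (`signCoeff`, zero unless the
sequence is a Dyck path). The incidence matrix is triangular, and a column in which `p` and `p + 1`
are linked takes the same value on two rows whose sign sequences differ by the exchange of `p` and
`p + 1`, and is zero on the rows with equal signs there. Hence, if `p` and `p + 1` are not linked in
`α`, the coefficient changes sign when two different signs at `p` and `p + 1` are exchanged
(`signCoeff_swap`).

Since `α` has no link inside a fused site, averaging over all exchanges of the two points of a site
replaces every block by its antisymmetrization over the sites with two different signs
(`pureZ_eq_average`). Rewrite the signs at a site as a charge `±1` (equal signs) or a dipole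
(opposite signs). Then a block is the product of the site gaps to powers `±1/2`, of a function of
the charges, and of the exponentials of the dipole-charge and dipole-dipole interactions, which are
of first order in the gap of each dipole involved (`cblock_sites`). The antisymmetrization keeps
only the terms that are odd in every dipole, so the singular factors cancel, and the limit is the
coefficient of the squarefree monomial of the dipoles in a generating polynomial
(`tendsto_signed_sum`, `tendsto_cblock_sites`). Thus the fused function is a combination of the
fused blocks `corr s t m y 1` (`fusedZ_eq`), which are visibly smooth.

Each fused block solves the third-order equation. The functional `Q ↦ corr s t m y Q` on
polynomials in the dipole variables `X_i` has two properties: differentiating in `y_i` inserts a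
polynomial `Γ_i` (`pd_corr`), and, by Euler's identity in the variable `X_i`, inserting
`X_i ∂_i Q + Q h_i` is the same as inserting `Q` (`corr_wick`). In terms of the currents, the sums
over `i` in the equation are evaluated by Ward identities (`ward_two`, `ward_three`) that rest on
the partial fraction relation between `1/(y_i - y_m)`, `1/(y_i - y_j)` and `1/(y_m - y_j)`; the
equation is then an algebraic identity (`ward_pde`, `thirdOrderOp_corr`). Linearity of the
differential operator gives the theorem.
-/

open Filter Finset
open scoped BigOperators Classical Topology

noncomputable section

/-- The open chamber `x 0 < x 1 < ⋯ < x (n-1)`. -/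
def chamber (n : ℕ) : Set (Fin n → ℝ) := {x | ∀ i j : Fin n, i < j → x i < x j}

/-- Planar pair partitions of `{0, …, 2N-1}` (i.e. of `{1,…,2N}` in 1-based labelling),
encoded as noncrossing fixed-point-free involutions: the links are the pairs `{i, f i}`. -/
def PlanarPair (N : ℕ) : Type :=
  {f : Fin (2 * N) → Fin (2 * N) //
    (∀ i, f (f i) = i) ∧ (∀ i, f i ≠ i) ∧
      ∀ i j, i < j → j < f i → i < f j ∧ f j < f i}

instance (N : ℕ) : Fintype (PlanarPair N) := by
  unfold PlanarPair; infer_instance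

/-- The Dyck step sequence of a planar pair partition: `+1` at openers, `-1` at closers. -/
def pairSign {N : ℕ} (α : PlanarPair N) (i : Fin (2 * N)) : ℝ :=
  if i < α.val i then 1 else -1

/-- The conformal block of a sign sequence: `∏_{i<j} (x_j - x_i)^{σ_i σ_j / 2}`. -/
def cblock {n : ℕ} (σ : Fin n → ℝ) (x : Fin n → ℝ) : ℝ :=
  ∏ p ∈ univ.filter (fun p : Fin n × Fin n => p.1 < p.2),
    (x p.2 - x p.1) ^ (σ p.1 * σ p.2 / 2)

/-- `σ` is the step sequence of a Dyck path. -/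
def IsDyck {n : ℕ} (σ : Fin n → ℝ) : Prop :=
  (∀ i, σ i = 1 ∨ σ i = -1) ∧
    (∀ k : Fin n, 0 ≤ ∑ i ∈ univ.filter (fun i : Fin n => i ≤ k), σ i) ∧
    ∑ i, σ i = 0

/-- The relation `α ⟵ β`: every link of `β` joins an opener of `α` to a closer of `α`. -/
def kwRel {N : ℕ} (α β : PlanarPair N) : Prop :=
  ∀ i, (i < α.val i) ↔ ¬ β.val i < α.val (β.val i)

/-- The incidence matrix `M` of the relation `⟵`. -/
def Mmat (N : ℕ) : Matrix (PlanarPair N) (PlanarPair N) ℝ :=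
  fun α β => if kwRel α β then 1 else 0

/-- The κ = 4 pure partition functions `Z_α = Σ_β (M⁻¹)_{α,β} U_β`. -/
def pureZ {N : ℕ} (α : PlanarPair N) (x : Fin (2 * N) → ℝ) : ℝ :=
  ∑ β : PlanarPair N, (Mmat N)⁻¹ α β * cblock (pairSign β) x

/-- Partial derivative in the `i`-th coordinate. -/
def pd {n : ℕ} (i : Fin n) (f : (Fin n → ℝ) → ℝ) : (Fin n → ℝ) → ℝ :=
  fun x => fderiv ℝ f x (Pi.single i 1)

/-- Doubling a configuration point: the limit point of total fusion. -/
def dup {N : ℕ} (y : Fin (2 * N) → ℝ) : Fin (2 * (2 * N)) → ℝ :=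
  fun i => y ⟨i.val / 2, by have := i.2; omega⟩

/-- The fusion normalization `∏_j (x_{2j} - x_{2j-1})^{1/2}`. -/
def fuseDenom {N : ℕ} (x : Fin (2 * (2 * N)) → ℝ) : ℝ :=
  ∏ j : Fin (2 * N),
    (x ⟨2 * j.val + 1, by have := j.2; omega⟩ - x ⟨2 * j.val, by have := j.2; omega⟩) ^
      ((1 : ℝ) / 2)

/-- `α` contains no link of the form `{2j-1, 2j}` (1-based). -/
def noFuseLink {N : ℕ} (α : PlanarPair (2 * N)) : Prop :=
  ∀ j : Fin (2 * N),
    α.val ⟨2 * j.val, by have := j.2; omega⟩ ≠ ⟨2 * j.val + 1, by have := j.2; omega⟩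

/-- The fused pure partition function `Ẑ_α`, defined as the fusion limit. -/
def fusedZ {N : ℕ} (α : PlanarPair (2 * N)) (y : Fin (2 * N) → ℝ) : ℝ :=
  limUnder (𝓝[chamber (2 * (2 * N))] dup y) fun x => pureZ α x / fuseDenom x

/-- The single-fusion of a conformal block with a slope at `j` (0-based `j`, `j+1`);
the fused point `ξ` sits at coordinate `j`, and coordinate `j+1` is ignored. -/
def Ufuse {n : ℕ} (σ : Fin n → ℝ) (j : ℕ) (hj : j + 1 < n) (x : Fin n → ℝ) : ℝ :=
  (∏ p ∈ univ.filter (fun p : Fin n × Fin n =>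
      p.1 < p.2 ∧ p.1.val ≠ j ∧ p.1.val ≠ j + 1 ∧ p.2.val ≠ j ∧ p.2.val ≠ j + 1),
    (x p.2 - x p.1) ^ (σ p.1 * σ p.2 / 2)) *
  ∏ i ∈ univ.filter (fun i : Fin n => i.val ≠ j ∧ i.val ≠ j + 1),
    |x i - x ⟨j, by omega⟩| ^ (σ i * σ ⟨j, by omega⟩)

/-- The single-fusion `V_{σ/∨_j}` of a conformal block with a local minimum at `j`. -/
def Vfuse {n : ℕ} (σ : Fin n → ℝ) (j : ℕ) (hj : j + 1 < n) (x : Fin n → ℝ) : ℝ :=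
  (∏ p ∈ univ.filter (fun p : Fin n × Fin n =>
      p.1 < p.2 ∧ p.1.val ≠ j ∧ p.1.val ≠ j + 1 ∧ p.2.val ≠ j ∧ p.2.val ≠ j + 1),
    (x p.2 - x p.1) ^ (σ p.1 * σ p.2 / 2)) *
  ∑ i ∈ univ.filter (fun i : Fin n => i.val ≠ j ∧ i.val ≠ j + 1),
    σ i * σ ⟨j, by omega⟩ / (x i - x ⟨j, by omega⟩)

/-- The single-fusion `Z_{α/⨿_j}` of a pure partition function. -/
def Zfuse {N : ℕ} (α : PlanarPair N) (j : ℕ) (hj : j + 1 < 2 * N) (x : Fin (2 * N) → ℝ) : ℝ :=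
  (∑ β ∈ univ.filter (fun β : PlanarPair N =>
      pairSign β ⟨j, by omega⟩ = -1 ∧ pairSign β ⟨j + 1, hj⟩ = 1),
    (Mmat N)⁻¹ α β * Vfuse (pairSign β) j hj x) +
  ∑ β ∈ univ.filter (fun β : PlanarPair N =>
      pairSign β ⟨j, by omega⟩ = pairSign β ⟨j + 1, hj⟩),
    (Mmat N)⁻¹ α β * Ufuse (pairSign β) j hj x

/-- The chamber `x_1 < ⋯ < x_{j-1} < ξ < x_{j+2} < ⋯` for single fusion at `j`:
coordinate `j` carries `ξ` and coordinate `j+1` is ignored. -/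
def fusedChamber (n j : ℕ) : Set (Fin n → ℝ) :=
  {x | ∀ k l : Fin n, k < l → k.val ≠ j + 1 → l.val ≠ j + 1 → x k < x l}

/-- Successor inside `Fin n` (identity at the top). -/
def fsucc {n : ℕ} (e : Fin n) : Fin n := if h : e.val + 1 < n then ⟨e.val + 1, h⟩ else e

/-- The set `J_n^m` of permutations from the fusion combinatorics. -/
def Jset (n m : ℕ) : Finset (Equiv.Perm (Fin n)) :=
  univ.filter fun σ =>
    (∀ k l : Fin n, k.val % 2 = 0 → l.val % 2 = 0 → k.val < l.val → l.val < 2 * m →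
      σ k < σ l) ∧
    (∀ k : Fin n, k.val % 2 = 0 → k.val < 2 * m → σ k < σ (fsucc k)) ∧
    ∀ k l : Fin n, 2 * m ≤ k.val → k.val < l.val → σ k < σ l

/-! ### Combinatorics of the incidence matrix -/

/-- A planar pair partition is determined by its openers. -/
lemma PlanarPair.ext_sign {N : ℕ} {f g : PlanarPair N}
    (h : ∀ i, (i < f.val i) ↔ (i < g.val i)) : f = g := by
  obtain ⟨f, hf1, hf2, hf3⟩ := f
  obtain ⟨g, hg1, hg2, hg3⟩ := g
  simp only at h
  have key : ∀ k : ℕ, ∀ i : Fin (2 * N), 2 * N - i.val ≤ k → i < f i → f i = g i := by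
    intro k
    induction k with
    | zero => intro i hi; omega
    | succ k ih =>
      intro i hi hfi
      have hgi := (h i).1 hfi
      rcases lt_trichotomy (f i) (g i) with hlt | heq | hgt
      · exfalso
        have hc := hg3 i (f i) hfi hlt
        have h1 : ¬ (f i < g (f i)) := by
          rw [← h, hf1]; exact not_lt.2 hfi.le
        have h2 : g (f i) < f i := lt_of_le_of_ne (not_lt.1 h1) (hg2 _)
        have h3 : g (f i) < g (g (f i)) := by rw [hg1]; exact h2
        have h4 := ih (g (f i)) (by have := hc.1; omega) ((h _).2 h3)
        rw [hg1] at h4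
        have h5 := congrArg f h4
        rw [hf1, hf1] at h5
        exact absurd h5 hc.1.ne'
      · exact heq
      · exfalso
        have hc := hf3 i (g i) hgi hgt
        have h1 : ¬ (g i < f (g i)) := by
          rw [h, hg1]; exact not_lt.2 hgi.le
        have h2 : f (g i) < g i := lt_of_le_of_ne (not_lt.1 h1) (hf2 _)
        have h3 : f (g i) < f (f (g i)) := by rw [hf1]; exact h2
        have h4 := ih (f (g i)) (by have := hc.1; omega) h3
        rw [hf1] at h4
        have h5 := congrArg g h4
        rw [hg1, hg1] at h5
        exact absurd h5.symm hc.1.ne'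
  apply Subtype.ext
  funext i
  simp only
  rcases lt_or_gt_of_ne (hf2 i) with hlt | hgt
  · have h1 : f i < f (f i) := by rw [hf1]; exact hlt
    have h2 := key _ (f i) le_rfl h1
    rw [hf1] at h2
    rw [h2, hg1, ← h2]
  · exact key _ i le_rfl hgt

lemma pairSign_eq_one_or {N : ℕ} (α : PlanarPair N) (i : Fin (2 * N)) :
    pairSign α i = 1 ∨ pairSign α i = -1 := by
  unfold pairSign; split_ifs <;> simp

lemma pairSign_eq_iff {N : ℕ} (α β : PlanarPair N) (i k : Fin (2 * N)) :
    pairSign α i = pairSign β k ↔ ((i < α.val i) ↔ (k < β.val k)) := by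
  unfold pairSign
  by_cases h1 : i < α.val i <;> by_cases h2 : k < β.val k <;>
    simp only [h1, h2, if_true, if_false] <;> norm_num

lemma pairSign_injective {N : ℕ} : Function.Injective (pairSign (N := N)) := by
  intro f g h
  exact PlanarPair.ext_sign fun i => (pairSign_eq_iff f g i i).1 (congrFun h i)

lemma pairSign_link {N : ℕ} (β : PlanarPair N) (i : Fin (2 * N)) :
    pairSign β (β.val i) = - pairSign β i := by
  obtain ⟨f, hf1, hf2, hf3⟩ := β
  unfold pairSign
  simp only [hf1]
  rcases lt_or_gt_of_ne (hf2 i) with h | h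
  · simp [h, h.not_gt]
  · simp [h, h.not_gt]

lemma kwRel_iff {N : ℕ} (α β : PlanarPair N) :
    kwRel α β ↔ ∀ i, pairSign α (β.val i) = - pairSign α i := by
  unfold kwRel pairSign
  refine forall_congr' fun i => ?_
  by_cases h1 : i < α.val i <;> by_cases h2 : β.val i < α.val (β.val i) <;>
    simp only [h1, h2, if_true, if_false] <;> norm_num

/-- The area-type statistic for which the incidence matrix is triangular. -/
def signStat {N : ℕ} (α : PlanarPair N) : ℝ := ∑ i, (i.val : ℝ) * pairSign α i

lemma signStat_eq {N : ℕ} {α β : PlanarPair N} (h : kwRel α β) :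
    2 * signStat α = ∑ i, ((i.val : ℝ) - (β.val i).val) * pairSign α i := by
  rw [kwRel_iff] at h
  have e : signStat α = ∑ i, ((β.val i).val : ℝ) * pairSign α (β.val i) :=
    (Equiv.sum_comp (Function.Involutive.toPerm β.val β.2.1)
      (fun i => (i.val : ℝ) * pairSign α i)).symm
  rw [two_mul]
  nth_rewrite 2 [e]
  unfold signStat
  rw [← Finset.sum_add_distrib]
  exact Finset.sum_congr rfl fun i _ => by rw [h i]; ring

lemma kwRel_refl {N : ℕ} (β : PlanarPair N) : kwRel β β := by
  rw [kwRel_iff]; exact pairSign_link β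

lemma signTerm_le {N : ℕ} (α β : PlanarPair N) (i : Fin (2 * N)) :
    ((i.val : ℝ) - (β.val i).val) * pairSign β i ≤
      ((i.val : ℝ) - (β.val i).val) * pairSign α i := by
  have hb : ((i.val : ℝ) - (β.val i).val) * pairSign β i = -|(i.val : ℝ) - (β.val i).val| := by
    unfold pairSign
    split_ifs with h
    · have : (i.val : ℝ) < (β.val i).val := by exact_mod_cast h
      rw [abs_of_neg (by linarith)]; ring
    · have : ((β.val i).val : ℝ) ≤ (i.val : ℝ) := by exact_mod_cast not_lt.1 h
      rw [abs_of_nonneg (by linarith)]; ring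
  rw [hb]
  rcases pairSign_eq_one_or α i with h | h <;> rw [h]
  · rw [mul_one]; exact neg_abs_le _
  · rw [mul_neg_one]; exact neg_le_neg (le_abs_self _)

/-- Strict monotonicity of the statistic along the relation: a link of `β` contributes at least as
much to the statistic of `α` as to that of `β`, with equality only when the two sign sequences agree
on it. -/
lemma signStat_lt {N : ℕ} {α β : PlanarPair N} (h : kwRel α β) (hne : α ≠ β) :
    signStat β < signStat α := by
  have h1 := signStat_eq h
  have h2 := signStat_eq (kwRel_refl β)
  have hle : signStat β ≤ signStat α := by
    have := Finset.sum_le_sum fun i (_ : i ∈ univ) => signTerm_le α β i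
    linarith
  refine lt_of_le_of_ne hle fun heq => hne ?_
  have hs : ∑ i, ((i.val : ℝ) - (β.val i).val) * pairSign β i =
      ∑ i, ((i.val : ℝ) - (β.val i).val) * pairSign α i := by rw [← h1, ← h2, heq]
  have ht := (Finset.sum_eq_sum_iff_of_le fun i _ => signTerm_le α β i).1 hs
  apply pairSign_injective
  funext i
  have h3 := ht i (mem_univ _)
  have hne : (i.val : ℝ) - (β.val i).val ≠ 0 := by
    rw [sub_ne_zero]
    intro h
    exact β.2.2.1 i (Fin.ext (by exact_mod_cast h.symm))
  exact (mul_left_cancel₀ hne h3).symm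

/-- Triangularity of the incidence matrix: its principal submatrix on an arbitrary set `A` of link
patterns has trivial left kernel. -/
lemma eq_zero_of_vecMul_on {N : ℕ} (A : Set (PlanarPair N)) (w : PlanarPair N → ℝ)
    (hw : ∀ γ, γ ∉ A → w γ = 0)
    (h : ∀ γ ∈ A, ∑ β, w β * Mmat N β γ = 0) : w = 0 := by
  by_contra hne
  obtain ⟨γ₀, hγ₀⟩ := Function.ne_iff.1 hne
  obtain ⟨γ, hγ, hmax⟩ := Finset.exists_max_image (univ.filter fun γ => w γ ≠ 0) signStat
    ⟨γ₀, by simpa using hγ₀⟩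
  have hγ' : w γ ≠ 0 := by simpa using hγ
  have hA : γ ∈ A := by by_contra hA; exact hγ' (hw γ hA)
  have h0 := h γ hA
  rw [Finset.sum_eq_single γ] at h0
  · apply hγ'
    simpa [Mmat, kwRel_refl] using h0
  · intro β _ hb
    by_cases hk : kwRel β γ
    · have hlt := signStat_lt hk hb
      have : w β = 0 := by
        by_contra hwb
        exact absurd (hmax β (by simpa using hwb)) (not_le.2 hlt)
      rw [this, zero_mul]
    · simp [Mmat, hk]
  · simp

lemma Mmat_inv_mul (N : ℕ) : (Mmat N)⁻¹ * Mmat N = 1 := by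
  have hu : IsUnit (Mmat N) := by
    rw [← Matrix.vecMul_injective_iff_isUnit]
    intro v w hvw
    have : v - w = 0 := by
      apply eq_zero_of_vecMul_on Set.univ
      · intro γ hγ; exact absurd (Set.mem_univ _) hγ
      · intro γ _
        have := congrFun hvw γ
        simp only [Matrix.vecMul, dotProduct] at this
        simp only [Pi.sub_apply, sub_mul, Finset.sum_sub_distrib]
        linarith
    exact sub_eq_zero.1 this
  exact Matrix.nonsing_inv_mul _ ((Matrix.isUnit_iff_isUnit_det _).1 hu)

/-- If `p` is an opener and `p + 1` a closer then they are linked. -/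
lemma link_of_peak {N : ℕ} (β : PlanarPair N) (p q : Fin (2 * N)) (hpq : q.val = p.val + 1)
    (hp : p < β.val p) (hq : ¬ q < β.val q) : β.val p = q := by
  obtain ⟨f, hf1, hf2, hf3⟩ := β
  simp only at *
  by_contra hne
  have h1 : q < f p := by
    rw [Fin.lt_def] at *
    have : (f p).val ≠ q.val := fun h => hne (Fin.ext h)
    omega
  have h2 := hf3 p q (by rw [Fin.lt_def]; omega) h1
  have h3 := hf2 q
  have : (f q).val ≠ q.val := fun h => h3 (Fin.ext h)
  simp only [Fin.lt_def] at *
  omega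

/-- The link pattern obtained from a valley at `p, q = p + 1` by linking `p` with `q` and
joining their former partners. -/
def closeFun {n : ℕ} (f : Fin n → Fin n) (p q : Fin n) (i : Fin n) : Fin n :=
  if i = p then q else if i = q then p else if i = f p then f q else if i = f q then f p else f i

/-- Exchanging the signs at a valley `p, p + 1` turns a Dyck path into another one, with a peak. -/
lemma exists_close {N : ℕ} (β : PlanarPair N) (p q : Fin (2 * N)) (hpq : q.val = p.val + 1)
    (hp : ¬ p < β.val p) (hq : q < β.val q) :
    ∃ γ : PlanarPair N, γ.val p = q ∧
      pairSign γ = fun i => pairSign β (Equiv.swap p q i) := by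
  obtain ⟨f, hf1, hf2, hf3⟩ := β
  simp only at hp hq
  have hp' : f p < p := lt_of_le_of_ne (not_lt.1 hp) (hf2 p)
  have hinj : ∀ i k, f i = f k → i = k := fun i k h => by rw [← hf1 i, h, hf1]
  have hf4 : ∀ i k, f i = k → f k = i := fun i k h => by rw [← h, hf1]
  refine ⟨⟨closeFun f p q, ?_, ?_, ?_⟩, ?_, ?_⟩
  · intro i
    unfold closeFun
    grind
  · intro i
    unfold closeFun
    grind
  · intro i k h1 h2
    have hC : p < q := by rw [Fin.lt_def]; omega
    have hab : f p < f q := (hp'.trans hC).trans hq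
    have nv : ∀ a b : Fin (2 * N), a ≠ b → a.val ≠ b.val := fun a b h h' => h (Fin.ext h')
    unfold closeFun at *
    by_cases c1 : i = p
    · subst c1
      simp only [if_true, Fin.lt_def] at *
      omega
    by_cases c2 : i = q
    · subst c2
      simp only [c1, if_true, if_false, Fin.lt_def] at *
      omega
    by_cases c3 : i = f p
    · have c4 : f p ≠ p := hp'.ne
      have c5 : f p ≠ q := (hp'.trans hC).ne
      subst c3
      simp only [c4, c5, if_true, if_false] at h2 ⊢
      by_cases d1 : k = p
      · subst d1
        simp only [if_true]
        exact ⟨hp'.trans hC, hq⟩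
      by_cases d2 : k = q
      · subst d2
        simp only [d1, if_true, if_false]
        exact ⟨hp', hC.trans hq⟩
      simp only [d1, d2, h1.ne', h2.ne, if_false]
      have e1 := hf3 (f p) k h1
      have e2 := hf3 q k
      rw [hf1] at e1
      have d1' := nv _ _ d1
      have d2' := nv _ _ d2
      simp only [Fin.lt_def] at *
      omega
    by_cases c4 : i = f q
    · subst c4
      simp only [c1, c2, c3, if_true, if_false] at h2
      exact absurd (h1.trans h2) hab.not_gt
    simp only [c1, c2, c3, c4, if_false] at h2 ⊢
    have c1' := nv _ _ c1
    have c2' := nv _ _ c2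
    have n1 : (f i).val ≠ p.val := nv _ _ fun h => c3 (hf4 _ _ h).symm
    have n2 : (f i).val ≠ q.val := nv _ _ fun h => c4 (hf4 _ _ h).symm
    have e0 := hf3 i k h1 h2
    have e1 := hf3 i p
    have e2 := hf3 i q
    by_cases d1 : k = p
    · subst d1
      simp only [if_true]
      simp only [Fin.lt_def] at *
      omega
    by_cases d2 : k = q
    · subst d2
      simp only [d1, if_true, if_false]
      simp only [Fin.lt_def] at *
      omega
    simp only [d1, d2, if_false]
    by_cases d3 : k = f p
    · subst d3
      simp only [if_true]
      rw [hf1] at e0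
      simp only [Fin.lt_def] at *
      omega
    by_cases d4 : k = f q
    · subst d4
      simp only [d3, if_true, if_false]
      rw [hf1] at e0
      simp only [Fin.lt_def] at *
      omega
    simp only [d3, d4, if_false]
    exact e0
  · simp [closeFun]
  · funext i
    have hC : p < q := by rw [Fin.lt_def]; omega
    unfold pairSign closeFun
    simp only
    by_cases h1 : i = p
    · subst h1; simp [Equiv.swap_apply_left, hC, hq]
    · by_cases h2 : i = q
      · subst h2; simp [Equiv.swap_apply_right, hC.ne', hC.not_gt, hp]
      · rw [Equiv.swap_apply_of_ne_of_ne h1 h2]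
        simp only [h1, h2, if_false]
        by_cases h3 : i = f p
        · subst h3; simp [hf1, hp', (hp'.trans hC).trans hq]
        · by_cases h4 : i = f q
          · subst h4
            simp [h3, hf1, hq.not_gt, ((hp'.trans hC).trans hq).not_gt]
          · simp [h3, h4]

/-- Coefficients of the pure partition function, as a function of the sign sequence. -/
def signCoeff {N : ℕ} (α : PlanarPair N) (σ : Fin (2 * N) → ℝ) : ℝ :=
  ∑ β, if pairSign β = σ then (Mmat N)⁻¹ α β else 0

lemma signCoeff_pairSign {N : ℕ} (α β : PlanarPair N) :
    signCoeff α (pairSign β) = (Mmat N)⁻¹ α β := by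
  unfold signCoeff
  simp [pairSign_injective.eq_iff]

/-- If `p` and `p + 1` are not linked in `α`, exchanging a peak with a valley at `p` changes
the sign of the coefficient. -/
lemma signCoeff_link {N : ℕ} (α : PlanarPair N) (p q : Fin (2 * N)) (hpq : q.val = p.val + 1)
    (hα : α.val p ≠ q) (γ : PlanarPair N) (hγ : γ.val p = q) :
    signCoeff α (pairSign γ) + signCoeff α (fun i => pairSign γ (Equiv.swap p q i)) = 0 := by
  have hC : p < q := by rw [Fin.lt_def]; omega
  -- the vector `w` of the claimed zeros lies in the left kernel of the principal submatrix of `M`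
  -- on the patterns with link `{p, q}`, since the row `α` of `M⁻¹ M = 1` vanishes there
  set w : PlanarPair N → ℝ := fun γ => if γ.val p = q then
    signCoeff α (pairSign γ) + signCoeff α (fun i => pairSign γ (Equiv.swap p q i)) else 0
    with hw
  have sgn : ∀ γ : PlanarPair N, γ.val p = q → pairSign γ p = 1 ∧ pairSign γ q = -1 := by
    intro γ h
    have h1 : pairSign γ p = 1 := by unfold pairSign; rw [if_pos (by rw [h]; exact hC)]
    refine ⟨h1, ?_⟩
    rw [← h, pairSign_link, h1]
  have inner : ∀ β γ : PlanarPair N, γ.val p = q →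
      ∑ γ', (if γ'.val p = q then ((if pairSign β = pairSign γ' then (1:ℝ) else 0) +
        (if pairSign β = fun i => pairSign γ' (Equiv.swap p q i) then 1 else 0)) *
          Mmat N γ' γ else 0) = Mmat N β γ := by
    intro β γ hγ
    have swq : ∀ γ' : PlanarPair N, (pairSign β = fun i => pairSign γ' (Equiv.swap p q i)) →
        pairSign β p = pairSign γ' q ∧ pairSign β q = pairSign γ' p := by
      intro γ' h
      constructor
      · rw [h]; simp
      · rw [h]; simp
    by_cases hp : p < β.val p
    · by_cases hq : q < β.val q
      · have hb1 : pairSign β p = 1 := by unfold pairSign; rw [if_pos hp]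
        have hb2 : pairSign β q = 1 := by unfold pairSign; rw [if_pos hq]
        rw [Finset.sum_eq_zero]
        · have : ¬ kwRel β γ := by
            rw [kwRel_iff]
            intro h
            have := h p
            rw [hγ, hb1, hb2] at this
            norm_num at this
          simp [Mmat, this]
        · intro γ' _
          split_ifs with h1 h2 h3 h3
          all_goals first
            | (exfalso; rw [h2] at hb1 hb2; have := sgn γ' h1; linarith)
            | (exfalso; have := swq γ' h3; have := sgn γ' h1; linarith)
            | simp
      · have hl := link_of_peak β p q hpq hp hq
        rw [Finset.sum_eq_single β]
        · rw [if_pos hl, if_pos rfl, if_neg, add_zero, one_mul]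
          intro h
          have := swq β h
          have := sgn β hl
          linarith
        · intro γ' _ hne
          split_ifs with h1 h2 h3 h3
          all_goals first
            | (exact absurd (pairSign_injective h2).symm hne)
            | (exfalso; have := swq γ' h3; have := sgn γ' h1; have := sgn β hl; linarith)
            | simp
        · simp
    · have hb1 : pairSign β p = -1 := by unfold pairSign; rw [if_neg hp]
      by_cases hq : q < β.val q
      · obtain ⟨δ, hδ1, hδ2⟩ := exists_close β p q hpq hp hq
        have hδ3 : pairSign β = fun i => pairSign δ (Equiv.swap p q i) := by
          rw [hδ2]; funext i; simp
        rw [Finset.sum_eq_single δ]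
        · rw [if_pos hδ1, if_neg, if_pos hδ3, zero_add, one_mul]
          · have : kwRel δ γ ↔ kwRel β γ := by
              rw [kwRel_iff, kwRel_iff, hδ2]
              have hγ2 : γ.val q = p := by rw [← hγ]; exact γ.2.1 p
              refine forall_congr' fun i => ?_
              by_cases h1 : i = p
              · subst h1; rw [hγ]; simp only [Equiv.swap_apply_left, Equiv.swap_apply_right]
                constructor <;> intro h <;> linarith
              · by_cases h2 : i = q
                · subst h2; rw [hγ2]; simp only [Equiv.swap_apply_left, Equiv.swap_apply_right]
                  constructor <;> intro h <;> linarith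
                · simp only []
                  rw [Equiv.swap_apply_of_ne_of_ne h1 h2, Equiv.swap_apply_of_ne_of_ne]
                  · intro h; apply h2; rw [← hγ, ← h, γ.2.1]
                  · intro h; apply h1; rw [← hγ2, ← h, γ.2.1]
            simp [Mmat, this]
          · intro h
            rw [h] at hb1
            have := sgn δ hδ1
            linarith
        · intro γ' _ hne
          split_ifs with h1 h2 h3 h3
          all_goals first
            | (exfalso; rw [h2] at hb1; have := sgn γ' h1; linarith)
            | (exfalso; apply hne; apply pairSign_injective; rw [hδ2, h3]; funext i; simp)
            | simp
        · simp
      · have hb2 : pairSign β q = -1 := by unfold pairSign; rw [if_neg hq]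
        rw [Finset.sum_eq_zero]
        · have : ¬ kwRel β γ := by
            rw [kwRel_iff]
            intro h
            have := h p
            rw [hγ, hb1, hb2] at this
            norm_num at this
          simp [Mmat, this]
        · intro γ' _
          split_ifs with h1 h2 h3 h3
          all_goals first
            | (exfalso; rw [h2] at hb1 hb2; have := sgn γ' h1; linarith)
            | (exfalso; have := swq γ' h3; have := sgn γ' h1; linarith)
            | simp
  have hw0 : w = 0 := by
    apply eq_zero_of_vecMul_on {γ | γ.val p = q}
    · intro γ hγ
      exact if_neg hγ
    · intro γ hγ
      have hαγ : α ≠ γ := fun h => hα (by rw [h]; exact hγ)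
      have h1 := congrFun (congrFun (Mmat_inv_mul N) α) γ
      rw [Matrix.mul_apply, Matrix.one_apply_ne hαγ] at h1
      rw [← h1]
      have h2 : ∀ β, (Mmat N)⁻¹ α β * Mmat N β γ = ∑ γ', (Mmat N)⁻¹ α β *
        (if γ'.val p = q then ((if pairSign β = pairSign γ' then (1:ℝ) else 0) +
        (if pairSign β = fun i => pairSign γ' (Equiv.swap p q i) then 1 else 0)) *
          Mmat N γ' γ else 0) := by
        intro β; rw [← Finset.mul_sum, inner β γ hγ]
      rw [Finset.sum_congr rfl fun β _ => h2 β, Finset.sum_comm]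
      refine Finset.sum_congr rfl fun γ' _ => ?_
      simp only [hw]
      split_ifs with h3
      · unfold signCoeff
        rw [← Finset.sum_add_distrib, Finset.sum_mul]
        refine Finset.sum_congr rfl fun β _ => ?_
        split_ifs <;> ring
      · simp
  have := congrFun hw0 γ
  simpa [hw, hγ] using this

lemma signCoeff_swap {N : ℕ} (α : PlanarPair N) (p q : Fin (2 * N)) (hpq : q.val = p.val + 1)
    (hα : α.val p ≠ q) (σ : Fin (2 * N) → ℝ) (hσ : σ p ≠ σ q) :
    signCoeff α (fun i => σ (Equiv.swap p q i)) = - signCoeff α σ := by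
  have hC : p < q := by rw [Fin.lt_def]; omega
  have hne0 : ∀ τ : Fin (2 * N) → ℝ, signCoeff α τ ≠ 0 → ∃ β, pairSign β = τ := by
    intro τ h
    by_contra hcon
    push Not at hcon
    exact h (Finset.sum_eq_zero fun β _ => if_neg (hcon β))
  have key : ∀ τ : Fin (2 * N) → ℝ, τ p ≠ τ q → signCoeff α τ ≠ 0 →
      signCoeff α (fun i => τ (Equiv.swap p q i)) = - signCoeff α τ := by
    intro τ hτ h
    obtain ⟨β, rfl⟩ := hne0 τ h
    by_cases hp : p < β.val p
    · have hq : ¬ q < β.val q := by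
        intro hq; apply hτ; rw [pairSign_eq_iff]; simp [hp, hq]
      have := signCoeff_link α p q hpq hα β (link_of_peak β p q hpq hp hq)
      linarith
    · have hq : q < β.val q := by
        by_contra hq; apply hτ; rw [pairSign_eq_iff]; simp [hp, hq]
      obtain ⟨γ, h1, h2⟩ := exists_close β p q hpq hp hq
      have := signCoeff_link α p q hpq hα γ h1
      rw [h2] at this
      simp only [Equiv.swap_apply_self] at this
      have e : (fun i => pairSign β i) = pairSign β := rfl
      rw [e] at this
      linarith
  by_cases h : signCoeff α σ = 0
  · by_contra hcon
    rw [h, neg_zero] at hcon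
    have := key (fun i => σ (Equiv.swap p q i)) (by simpa using hσ.symm) hcon
    simp only [Equiv.swap_apply_self] at this
    have e : (fun i => σ i) = σ := rfl
    rw [e] at this
    apply hcon
    linarith
  · exact key σ hσ h

/-! ### Ward identities -/

/-- A double sum of a function that is antisymmetric under exchange of its arguments vanishes. -/
lemma sum_sum_antisymm {ι A : Type*} [CommRing A] [NoZeroDivisors A] [CharZero A]
    (I : Finset ι) (H : ι → ι → A) (hH : ∀ i ∈ I, ∀ m ∈ I, H i m + H m i = 0) :
    ∑ i ∈ I, ∑ m ∈ I, H i m = 0 := by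
  have h1 : ∑ i ∈ I, ∑ m ∈ I, (H i m + H m i) = 0 :=
    Finset.sum_eq_zero fun i hi => Finset.sum_eq_zero fun m hm => hH i hi m hm
  simp only [Finset.sum_add_distrib] at h1
  rw [Finset.sum_comm (f := fun i m => H m i), ← two_mul] at h1
  exact (mul_eq_zero.1 h1).resolve_left two_ne_zero

section Ward

variable {ι A : Type*} [Fintype ι] [CommRing A]

/-- The logarithmic derivative `Γ_i` of the fused block in the direction of the site `i`, as an
element of the ring generated by the charges `S`, the nilpotent variables `T` and the
propagators `R i m = 1 / (y_i - y_m)`. -/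
def wardGamma (S T : ι → A) (R : ι → ι → A) (i : ι) : A :=
  ∑ m, (2 * S i * S m * R i m + 2 * (S i * T m - T i * S m) * R i m ^ 2
    - 4 * T i * T m * R i m ^ 3)

/-- The multiplier `h_i` of the Wick relation at the site `i`. -/
def wardH (S T : ι → A) (R : ι → ι → A) (i : ι) : A :=
  S i ^ 2 + ∑ m, 2 * T i * (S m * R i m + T m * R i m ^ 2)

/-- The current at the site `j`, where `p i = 1 / (y_i - y_j)`. -/
def wJ0 (S T p : ι → A) : A := ∑ i, (-(S i * p i) + T i * p i ^ 2)

/-- The first derivative of the current `wJ0` in `y_j`. -/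
def wJ1 (S T p : ι → A) : A := ∑ i, (-(S i * p i ^ 2) + 2 * T i * p i ^ 3)

/-- The second derivative of the current `wJ0` in `y_j`. -/
def wJ2 (S T p : ι → A) : A := ∑ i, (-(2 * S i * p i ^ 3) + 6 * T i * p i ^ 4)

/-- A third of the third derivative of the current `wJ0` in `y_j`. -/
def wJ3 (S T p : ι → A) : A := ∑ i, (-(2 * S i * p i ^ 4) + 8 * T i * p i ^ 5)

variable (S T : ι → A) (R : ι → ι → A) (j : ι)

lemma wardGamma_eq (hR : ∀ i m, R i m = - R m i) :
    wardGamma S T R j =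
      2 * S j * wJ0 S T (fun i => R i j) + 2 * T j * wJ1 S T (fun i => R i j) := by
  unfold wardGamma wJ0 wJ1
  rw [Finset.mul_sum, Finset.mul_sum, ← Finset.sum_add_distrib]
  refine Finset.sum_congr rfl fun m _ => ?_
  rw [hR j m]; ring

variable [NoZeroDivisors A] [CharZero A]

variable {S T R j}

/-- The Ward identity for `∑ h_i / (y_i - y_j)² - Γ_i / (y_i - y_j)`. -/
lemma ward_two (hST : ∀ i, S i * T i = 0) (hR : ∀ i m, R i m = - R m i)
    (hR3 : ∀ i m, i ≠ j → m ≠ j → i ≠ m → R i m * (R i j - R m j) + R i j * R m j = 0) :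
    ∑ i, (R i j ^ 2 * wardH S T R i - R i j * wardGamma S T R i) =
      wJ0 S T (fun i => R i j) ^ 2 - ∑ i, T i ^ 2 * R i j ^ 4
        + 2 * S j * wJ1 S T (fun i => R i j) + T j * wJ2 S T (fun i => R i j) := by
  have h0 : ∀ i, R i i = 0 := fun i => by
    have := hR i i
    have h2 : 2 * R i i = 0 := by linear_combination this
    exact (mul_eq_zero.1 h2).resolve_left two_ne_zero
  set p : ι → A := fun i => R i j with hp
  have hpj : p j = 0 := h0 j
  set q : ι → A := fun i => -(S i * p i) + T i * p i ^ 2 with hq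
  set G : ι → ι → A := fun i m => p i ^ 2 * (2 * T i * (S m * R i m + T m * R i m ^ 2))
    - p i * (2 * S i * S m * R i m + 2 * (S i * T m - T i * S m) * R i m ^ 2
    - 4 * T i * T m * R i m ^ 3) with hG
  have e1 : ∀ i, p i ^ 2 * wardH S T R i - p i * wardGamma S T R i =
      p i ^ 2 * S i ^ 2 + ∑ m, G i m := by
    intro i
    simp only [wardH, wardGamma, hG, Finset.sum_sub_distrib, ← Finset.mul_sum]
    ring
  have hsq : wJ0 S T p ^ 2 = ∑ i, ∑ m, q i * q m := by
    rw [sq, wJ0, Finset.sum_mul_sum]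
  have key : ∑ i, ∑ m, (G i m - q i * q m + (if i = m then q i ^ 2 else 0)
      - (if m = j then G i j else 0)) = 0 := by
    refine (Finset.sum_congr rfl fun i _ => Finset.sum_congr rfl fun m _ => ?_).trans
      (sum_sum_antisymm univ (fun i m => if i = j ∨ m = j then 0 else
        G i m - q i * q m + (if i = m then q i ^ 2 else 0)) ?_)
    · by_cases hm : m = j
      · subst hm
        have : q m = 0 := by simp [hq, hpj]
        by_cases him : i = m
        · subst him; simp [this]
        · simp [this, him]
      · by_cases hi : i = j
        · subst hi
          have : q i = 0 := by simp [hq, hpj]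
          have h3 : G i m = 0 := by simp [hG, hpj]
          simp [this, h3, hm]
        · simp [hi, hm]
    · intro i _ m _
      by_cases hi : i = j
      · simp [hi]
      by_cases hm : m = j
      · simp [hm]
      by_cases him : i = m
      · subst him
        simp only [hi, or_self, if_false, if_true]
        simp [hG, h0]; ring
      simp only [hi, hm, him, Ne.symm him, or_self, if_false, hG, hq]
      rw [hR m i]
      have e := hR3 i m hi hm him
      change R i m * (p i - p m) + p i * p m = 0 at e
      linear_combination (-2 * S i * S m + S i * T m * (-2 * R i m + 2 * p m)
        + S m * T i * (2 * R i m + 2 * p i) + T i * T m * (4 * R i m ^ 2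
          + 2 * R i m * (p i - p m) - 2 * p i * p m)) * e
  simp only [Finset.sum_add_distrib, Finset.sum_sub_distrib, Finset.sum_ite_eq, mem_univ,
    if_true, Finset.sum_ite_eq', ← hsq] at key
  rw [Finset.sum_congr rfl fun i _ => e1 i, Finset.sum_add_distrib]
  have e2 : ∑ i, G i j = 2 * S j * wJ1 S T p + T j * wJ2 S T p := by
    rw [wJ1, wJ2, Finset.mul_sum, Finset.mul_sum, ← Finset.sum_add_distrib]
    refine Finset.sum_congr rfl fun i _ => ?_
    simp only [hG, hp]; ring
  have e3 : ∑ i, q i ^ 2 = ∑ i, p i ^ 2 * S i ^ 2 + ∑ i, T i ^ 2 * p i ^ 4 := by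
    rw [← Finset.sum_add_distrib]
    refine Finset.sum_congr rfl fun i _ => ?_
    simp only [hq]
    linear_combination (-2 * p i ^ 3) * hST i
  rw [e2] at key
  linear_combination key - e3

/-- The Ward identity for `∑ 2 h_i / (y_i - y_j)³ - Γ_i / (y_i - y_j)²`. -/
lemma ward_three (hST : ∀ i, S i * T i = 0) (hR : ∀ i m, R i m = - R m i)
    (hR3 : ∀ i m, i ≠ j → m ≠ j → i ≠ m → R i m * (R i j - R m j) + R i j * R m j = 0) :
    ∑ i, (2 * R i j ^ 3 * wardH S T R i - R i j ^ 2 * wardGamma S T R i) =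
      2 * wJ0 S T (fun i => R i j) * wJ1 S T (fun i => R i j) - 4 * ∑ i, T i ^ 2 * R i j ^ 5
        + S j * wJ2 S T (fun i => R i j) + T j * wJ3 S T (fun i => R i j) := by
  have h0 : ∀ i, R i i = 0 := fun i => by
    have := hR i i
    have h2 : 2 * R i i = 0 := by linear_combination this
    exact (mul_eq_zero.1 h2).resolve_left two_ne_zero
  set p : ι → A := fun i => R i j with hp
  have hpj : p j = 0 := h0 j
  set q : ι → A := fun i => -(S i * p i) + T i * p i ^ 2 with hq
  set q' : ι → A := fun i => -(S i * p i ^ 2) + 2 * T i * p i ^ 3 with hq'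
  set G : ι → ι → A := fun i m => 2 * p i ^ 3 * (2 * T i * (S m * R i m + T m * R i m ^ 2))
    - p i ^ 2 * (2 * S i * S m * R i m + 2 * (S i * T m - T i * S m) * R i m ^ 2
    - 4 * T i * T m * R i m ^ 3) with hG
  have e1 : ∀ i, 2 * p i ^ 3 * wardH S T R i - p i ^ 2 * wardGamma S T R i =
      2 * p i ^ 3 * S i ^ 2 + ∑ m, G i m := by
    intro i
    simp only [wardH, wardGamma, hG, Finset.sum_sub_distrib, ← Finset.mul_sum]
    ring
  have hsq : ∑ i, q i * ∑ m, q' m = wJ0 S T p * wJ1 S T p := by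
    rw [← Finset.sum_mul]; rfl
  have key : ∑ i, ∑ m, (G i m - 2 * (q i * q' m) + (if i = m then 2 * (q i * q' i) else 0)
      - (if m = j then G i j else 0)) = 0 := by
    refine (Finset.sum_congr rfl fun i _ => Finset.sum_congr rfl fun m _ => ?_).trans
      (sum_sum_antisymm univ (fun i m => if i = j ∨ m = j then 0 else
        G i m - 2 * (q i * q' m) + (if i = m then 2 * (q i * q' i) else 0)) ?_)
    · by_cases hm : m = j
      · subst hm
        have : q' m = 0 := by simp [hq', hpj]
        by_cases him : i = m
        · subst him; simp [this]
        · simp [this, him]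
      · by_cases hi : i = j
        · subst hi
          have : q i = 0 := by simp [hq, hpj]
          have h3 : G i m = 0 := by simp [hG, hpj]
          simp [this, h3, hm]
        · simp [hi, hm]
    · intro i _ m _
      by_cases hi : i = j
      · simp [hi]
      by_cases hm : m = j
      · simp [hm]
      by_cases him : i = m
      · subst him
        simp only [hi, or_self, if_false, if_true]
        simp [hG, h0]
      simp only [hi, hm, him, Ne.symm him, or_self, if_false, hG, hq, hq']
      rw [hR m i]
      have e := hR3 i m hi hm him
      change R i m * (p i - p m) + p i * p m = 0 at e
      linear_combination (-2 * S i * S m * (p i + p m)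
        + S i * T m * (-2 * R i m * (p i + p m) + 2 * p m * (p i + 2 * p m))
        + S m * T i * (2 * R i m * (p i + p m) + 2 * p i * (p m + 2 * p i))
        + T i * T m * (4 * (p i + p m) * (R i m ^ 2 + R i m * (p i - p m) - p i * p m))) * e
  simp only [Finset.sum_add_distrib, Finset.sum_sub_distrib, Finset.sum_ite_eq, mem_univ,
    if_true, Finset.sum_ite_eq', ← Finset.mul_sum, hsq] at key
  rw [Finset.sum_congr rfl fun i _ => e1 i, Finset.sum_add_distrib]
  have e2 : ∑ i, G i j = S j * wJ2 S T p + T j * wJ3 S T p := by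
    rw [wJ2, wJ3, Finset.mul_sum, Finset.mul_sum, ← Finset.sum_add_distrib]
    refine Finset.sum_congr rfl fun i _ => ?_
    simp only [hG, hp]; ring
  have e3 : 2 * ∑ i, q i * q' i = ∑ i, 2 * p i ^ 3 * S i ^ 2 + 4 * ∑ i, T i ^ 2 * p i ^ 5 := by
    rw [Finset.mul_sum, Finset.mul_sum, ← Finset.sum_add_distrib]
    refine Finset.sum_congr rfl fun i _ => ?_
    simp only [hq, hq']
    linear_combination (-6 * p i ^ 4) * hST i
  rw [e2] at key
  linear_combination key - e3

/-- The third-order equation at the level of the ring `A`: `Λ` stands for the correlation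
functional, which kills multiples of `T i ^ 2` and satisfies the Wick relations `hW1`–`hW3`. -/
lemma ward_pde (Λ : A →+ ℝ) (hT2 : ∀ i Q, Λ (Q * T i ^ 2) = 0)
    (hST : ∀ i, S i * T i = 0) (hR : ∀ i m, R i m = - R m i)
    (hR3 : ∀ i m, i ≠ j → m ≠ j → i ≠ m → R i m * (R i j - R m j) + R i j * R m j = 0)
    (hj : (T j = 0 ∧ S j ^ 2 = 1) ∨ S j = 0)
    (hW1 : ∀ i, Λ (R i j ^ 2 * wardGamma S T R j) = Λ (R i j ^ 2 * (2 * S j * T i * R i j ^ 2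
      + 4 * T j * T i * R i j ^ 3) + R i j ^ 2 * wardGamma S T R j * wardH S T R i))
    (hW2 : ∀ i, Λ (2 * R i j ^ 3) = Λ (2 * R i j ^ 3 * wardH S T R i))
    (hW3 : Λ (wJ0 S T (fun i => R i j) * wJ1 S T (fun i => R i j)) =
      Λ (wJ0 S T (fun i => R i j) * wJ1 S T (fun i => R i j) * wardH S T R j)) :
    Λ (2 * S j * wJ2 S T (fun i => R i j) + 6 * T j * wJ3 S T (fun i => R i j)
        + 3 * wardGamma S T R j * (2 * S j * wJ1 S T (fun i => R i j)
          + 2 * T j * wJ2 S T (fun i => R i j)) + wardGamma S T R j ^ 3)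
      - 4 * ∑ i, (Λ (R i j ^ 2 * wardGamma S T R j) - Λ (R i j * (2 * S j * (S i * R i j ^ 2
          - 2 * T i * R i j ^ 3) + 2 * T j * (2 * S i * R i j ^ 3 - 6 * T i * R i j ^ 4)
          + wardGamma S T R j * wardGamma S T R i)))
      + 2 * ∑ i, (Λ (2 * R i j ^ 3) - Λ (R i j ^ 2 * wardGamma S T R i)) = 0 := by
  have h4 : ∀ x, 4 * Λ x = Λ (4 * x) := fun x => by
    rw [show (4 : A) * x = x + x + x + x by ring]; simp only [map_add]; ring
  have h2 : ∀ x, 2 * Λ x = Λ (2 * x) := fun x => by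
    rw [show (2 : A) * x = x + x by ring]; simp only [map_add]; ring
  have w2 := ward_two hST hR hR3
  have w3 := ward_three hST hR hR3
  have wG := wardGamma_eq S T R j hR
  simp only [hW1, hW2]
  simp only [← map_sub, ← map_sum, h4, h2]
  rw [← map_add]
  set Γ := wardGamma S T R j with hΓ
  have e1 : ∑ i, (R i j ^ 2 * (2 * S j * T i * R i j ^ 2
      + 4 * T j * T i * R i j ^ 3) + R i j ^ 2 * Γ * wardH S T R i -
      R i j * (2 * S j * (S i * R i j ^ 2 - 2 * T i * R i j ^ 3) +
        2 * T j * (2 * S i * R i j ^ 3 - 6 * T i * R i j ^ 4) + Γ * wardGamma S T R i)) =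
      S j * wJ2 S T (fun i => R i j) + 2 * T j * wJ3 S T (fun i => R i j)
      + Γ * ∑ i, (R i j ^ 2 * wardH S T R i - R i j * wardGamma S T R i) := by
    rw [wJ2, wJ3, Finset.mul_sum, Finset.mul_sum, Finset.mul_sum, ← Finset.sum_add_distrib,
      ← Finset.sum_add_distrib]
    exact Finset.sum_congr rfl fun i _ => by ring
  rw [e1, w2, w3]
  set J0 := wJ0 S T (fun i => R i j) with hJ0
  set J1 := wJ1 S T (fun i => R i j) with hJ1
  set J2 := wJ2 S T (fun i => R i j) with hJ2
  set J3 := wJ3 S T (fun i => R i j) with hJ3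
  have z1 : ∀ Q, Λ (Q * ∑ i, T i ^ 2 * R i j ^ 4) = 0 := fun Q => by
    rw [Finset.mul_sum, map_sum]
    refine Finset.sum_eq_zero fun i _ => ?_
    rw [show Q * (T i ^ 2 * R i j ^ 4) = (Q * R i j ^ 4) * T i ^ 2 by ring, hT2]
  have z2 : ∀ Q, Λ (Q * ∑ i, T i ^ 2 * R i j ^ 5) = 0 := fun Q => by
    rw [Finset.mul_sum, map_sum]
    refine Finset.sum_eq_zero fun i _ => ?_
    rw [show Q * (T i ^ 2 * R i j ^ 5) = (Q * R i j ^ 5) * T i ^ 2 by ring, hT2]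
  set E4 := ∑ i, T i ^ 2 * R i j ^ 4
  set E5 := ∑ i, T i ^ 2 * R i j ^ 5
  rcases hj with ⟨hTj, hSj⟩ | hSj
  · rw [hTj] at wG ⊢
    rw [wG]
    refine (congrArg Λ (a₂ := 8 * S j * J0 * E4 + -8 * E5) ?_).trans
      (by rw [map_add, z1, z2, add_zero])
    linear_combination (8 * S j * J0 ^ 3 - 4 * J0 * J1) * hSj
  · rw [hSj] at wG ⊢
    have hh : wardH S T R j = 2 * T j * J0 := by
      rw [wardH, hSj, hJ0, wJ0, Finset.mul_sum, zero_pow two_ne_zero, zero_add]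
      refine Finset.sum_congr rfl fun m _ => ?_
      rw [hR j m]; ring
    rw [hh] at hW3
    have hW4 : Λ (4 * (J0 * J1)) = Λ (4 * (J0 * J1 * (2 * T j * J0))) := by
      rw [← h4, hW3, h4]
    have z3 := hT2 j (12 * J1 * J2 + 8 * T j * J1 ^ 3 - 8 * J1 * J2)
    rw [← sub_eq_zero, ← map_sub] at hW4
    rw [wG]
    refine (congrArg Λ (a₂ := 8 * T j * J1 * E4 + -8 * E5
      + (12 * J1 * J2 + 8 * T j * J1 ^ 3 - 8 * J1 * J2) * T j ^ 2
      + (4 * (J0 * J1) - 4 * (J0 * J1 * (2 * T j * J0)))) ?_).trans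
      (by rw [map_add, map_add, map_add, z1, z2, z3, hW4]; norm_num)
    ring

end Ward

/-! ### Coefficientwise differential calculus for polynomial-valued functions -/

lemma isOpen_chamber (n : ℕ) : IsOpen (chamber n) := by
  have : chamber n = ⋂ i, ⋂ j, ⋂ (_ : i < j), {x : Fin n → ℝ | x i < x j} := by
    ext x; simp [chamber]
  rw [this]
  refine isOpen_iInter_of_finite fun i => isOpen_iInter_of_finite fun j =>
    isOpen_iInter_of_finite fun _ => isOpen_lt (continuous_apply i) (continuous_apply j)

lemma chamber_sub_ne {n : ℕ} {y : Fin n → ℝ} (hy : y ∈ chamber n) {a b : Fin n} (h : a ≠ b) :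
    y a - y b ≠ 0 := by
  rcases lt_or_gt_of_ne h with h | h
  · exact (sub_neg.2 (hy a b h)).ne
  · exact (sub_pos.2 (hy b a h)).ne'

/-- `q'` is the partial derivative of the polynomial-valued function `q` in the `i`-th
coordinate at `y`, coefficient by coefficient. -/
def CoeffDeriv {n : ℕ} (i : Fin n) (q : (Fin n → ℝ) → MvPolynomial (Fin n) ℝ)
    (q' : MvPolynomial (Fin n) ℝ) (y : Fin n → ℝ) : Prop :=
  ∀ m, HasLineDerivAt ℝ (fun z => (q z).coeff m) (q'.coeff m) y (Pi.single i 1)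

/-- All coefficients of the polynomial-valued function `q` are smooth on the chamber. -/
def CoeffSmooth {n : ℕ} (q : (Fin n → ℝ) → MvPolynomial (Fin n) ℝ) : Prop :=
  ∀ m, ContDiffOn ℝ (⊤ : ℕ∞) (fun z => (q z).coeff m) (chamber n)

section CoeffCalculus

variable {n : ℕ} {i : Fin n} {q r : (Fin n → ℝ) → MvPolynomial (Fin n) ℝ}
  {q' r' : MvPolynomial (Fin n) ℝ} {y : Fin n → ℝ}

lemma CoeffDeriv.congr {q'' : MvPolynomial (Fin n) ℝ} (h : CoeffDeriv i q q' y)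
    (e : q' = q'') : CoeffDeriv i q q'' y := e ▸ h

lemma CoeffDeriv.const (c : MvPolynomial (Fin n) ℝ) : CoeffDeriv i (fun _ => c) 0 y := by
  intro m
  simpa [HasLineDerivAt] using hasDerivAt_const (0 : ℝ) (c.coeff m)

lemma CoeffDeriv.add (hq : CoeffDeriv i q q' y) (hr : CoeffDeriv i r r' y) :
    CoeffDeriv i (fun z => q z + r z) (q' + r') y := by
  intro m
  simp only [MvPolynomial.coeff_add]
  exact HasDerivAt.add (hq m) (hr m)

lemma CoeffDeriv.mul (hq : CoeffDeriv i q q' y) (hr : CoeffDeriv i r r' y) :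
    CoeffDeriv i (fun z => q z * r z) (q' * r y + q y * r') y := by
  intro m
  simp only [MvPolynomial.coeff_mul, MvPolynomial.coeff_add, ← Finset.sum_add_distrib]
  unfold HasLineDerivAt
  refine HasDerivAt.fun_sum fun x _ => ?_
  have := HasDerivAt.fun_mul (hq x.1) (hr x.2)
  simp only [zero_smul, add_zero] at this
  exact this

lemma CoeffDeriv.neg (hq : CoeffDeriv i q q' y) : CoeffDeriv i (fun z => - q z) (-q') y := by
  simpa using (CoeffDeriv.const (-1)).mul hq

lemma CoeffDeriv.const_mul (c : MvPolynomial (Fin n) ℝ) (hq : CoeffDeriv i q q' y) :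
    CoeffDeriv i (fun z => c * q z) (c * q') y :=
  ((CoeffDeriv.const c).mul hq).congr (by ring)

lemma CoeffDeriv.sum {κ : Type*} (I : Finset κ)
    {f : κ → (Fin n → ℝ) → MvPolynomial (Fin n) ℝ} {f' : κ → MvPolynomial (Fin n) ℝ}
    (h : ∀ k ∈ I, CoeffDeriv i (f k) (f' k) y) :
    CoeffDeriv i (fun z => ∑ k ∈ I, f k z) (∑ k ∈ I, f' k) y := by
  intro m
  simp only [MvPolynomial.coeff_sum]
  exact HasDerivAt.fun_sum fun k hk => h k hk m

lemma CoeffDeriv.pow (hq : CoeffDeriv i q q' y) (k : ℕ) :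
    CoeffDeriv i (fun z => q z ^ k) (k * q y ^ (k - 1) * q') y := by
  induction k with
  | zero => simpa using CoeffDeriv.const (i := i) (y := y) (1 : MvPolynomial (Fin n) ℝ)
  | succ k ih =>
    simp only [pow_succ]
    refine (ih.mul hq).congr ?_
    rcases k with _ | k
    · simp
    · simp only [Nat.add_sub_cancel, pow_succ]; push_cast; ring

lemma CoeffDeriv.C {f : (Fin n → ℝ) → ℝ} {f' : ℝ}
    (h : HasLineDerivAt ℝ f f' y (Pi.single i 1)) :
    CoeffDeriv i (fun z => MvPolynomial.C (f z)) (MvPolynomial.C f') y := by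
  intro m
  simp only [MvPolynomial.coeff_C]
  by_cases hm : 0 = m
  · simpa only [hm, if_true] using h
  · simpa [hm, HasLineDerivAt] using hasDerivAt_const (0 : ℝ) (0 : ℝ)

lemma CoeffSmooth.const (c : MvPolynomial (Fin n) ℝ) : CoeffSmooth (fun _ => c) :=
  fun _ => contDiffOn_const

lemma CoeffSmooth.add (hq : CoeffSmooth q) (hr : CoeffSmooth r) :
    CoeffSmooth (fun z => q z + r z) := by
  intro m
  simp only [MvPolynomial.coeff_add]
  exact (hq m).add (hr m)

lemma CoeffSmooth.mul (hq : CoeffSmooth q) (hr : CoeffSmooth r) :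
    CoeffSmooth (fun z => q z * r z) := by
  intro m
  simp only [MvPolynomial.coeff_mul]
  exact ContDiffOn.sum fun x _ => (hq x.1).mul (hr x.2)

lemma CoeffSmooth.neg (hq : CoeffSmooth q) : CoeffSmooth (fun z => - q z) := by
  simpa using (CoeffSmooth.const (-1)).mul hq

lemma CoeffSmooth.sub (hq : CoeffSmooth q) (hr : CoeffSmooth r) :
    CoeffSmooth (fun z => q z - r z) := by
  simpa [sub_eq_add_neg] using hq.add hr.neg

lemma CoeffSmooth.sum {κ : Type*} (I : Finset κ)
    {f : κ → (Fin n → ℝ) → MvPolynomial (Fin n) ℝ} (h : ∀ k ∈ I, CoeffSmooth (f k)) :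
    CoeffSmooth (fun z => ∑ k ∈ I, f k z) := by
  intro m
  simp only [MvPolynomial.coeff_sum]
  exact ContDiffOn.sum fun k hk => h k hk m

lemma CoeffSmooth.prod {κ : Type*} (I : Finset κ)
    {f : κ → (Fin n → ℝ) → MvPolynomial (Fin n) ℝ} (h : ∀ k ∈ I, CoeffSmooth (f k)) :
    CoeffSmooth (fun z => ∏ k ∈ I, f k z) := by
  induction I using Finset.induction_on with
  | empty => simpa using CoeffSmooth.const (1 : MvPolynomial (Fin n) ℝ)
  | insert a I ha ih =>
    simp only [Finset.prod_insert ha]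
    exact (h a (by simp)).mul (ih fun k hk => h k (by simp [hk]))

lemma CoeffSmooth.pow (hq : CoeffSmooth q) (k : ℕ) : CoeffSmooth (fun z => q z ^ k) := by
  simpa using CoeffSmooth.prod (Finset.range k) (f := fun _ => q) fun _ _ => hq

lemma CoeffSmooth.C {f : (Fin n → ℝ) → ℝ} (h : ContDiffOn ℝ (⊤ : ℕ∞) f (chamber n)) :
    CoeffSmooth (fun z => MvPolynomial.C (f z)) := by
  intro m
  simp only [MvPolynomial.coeff_C]
  by_cases hm : 0 = m
  · simpa only [hm, if_true] using h
  · simpa [hm] using contDiffOn_const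

end CoeffCalculus

/-- Leibniz rule for finite products, for any relation `Rel b a` (read: `a` is a derivative of `b`,
evaluated through the ring homomorphism `ev`) that satisfies the Leibniz rule for two factors. -/
lemma prod_rule {A B κ : Type*} [DecidableEq κ] [CommRing A] [CommRing B] (ev : B →+* A)
    (Rel : B → A → Prop)
    (h1 : Rel 1 0)
    (hmul : ∀ b b' a a', Rel b a → Rel b' a' → Rel (b * b') (a * ev b' + ev b * a'))
    (I : Finset κ) (f : κ → B) (f' : κ → A) (h : ∀ e ∈ I, Rel (f e) (f' e)) :
    Rel (∏ e ∈ I, f e) (∑ e ∈ I, f' e * ∏ e' ∈ I.erase e, ev (f e')) := by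
  induction I using Finset.induction_on with
  | empty => simpa using h1
  | insert a I ha ih =>
    rw [Finset.prod_insert ha, Finset.sum_insert ha, Finset.erase_insert ha]
    have := hmul _ _ _ _ (h a (by simp)) (ih fun e he => h e (by simp [he]))
    convert this using 1
    rw [map_prod, Finset.mul_sum]
    congr 1
    refine Finset.sum_congr rfl fun e he => ?_
    have hne : a ≠ e := fun h => ha (h ▸ he)
    rw [Finset.erase_insert_of_ne hne, Finset.prod_insert (by simp [ha])]
    ring

/-! ### The fused conformal blocks -/

/-- Indices of the factors of the generating polynomial: `inl (j, k)` for the interaction of the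
dipole at `j` with the charge at `k`, `inr (j, k)` for the interaction of two dipoles. -/
abbrev FEdge (n : ℕ) := (Fin n × Fin n) ⊕ (Fin n × Fin n)

/-- The exponent vector of the dipole variables carried by an edge. -/
def edgeVec {n : ℕ} : FEdge n → (Fin n →₀ ℕ)
  | .inl p => Finsupp.single p.1 1
  | .inr p => Finsupp.single p.1 1 + Finsupp.single p.2 1

/-- The interaction energy of an edge for charges `s` and dipole moments `t`; it is `0` on the
diagonal because `(y j - y j)⁻¹ = 0`. -/
def edgeWt {n : ℕ} (s t y : Fin n → ℝ) : FEdge n → ℝ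
  | .inl p => 2 * t p.1 * s p.2 * (y p.1 - y p.2)⁻¹
  | .inr p => t p.1 * t p.2 * (y p.1 - y p.2)⁻¹ ^ 2

/-- The generating polynomial `∏ (1 + θ_e X ^ v_e)`. Modulo squares of the variables it is the
exponential of the total interaction energy of the dipoles. -/
def genPoly {n : ℕ} (s t y : Fin n → ℝ) : MvPolynomial (Fin n) ℝ :=
  ∏ e, (1 + MvPolynomial.monomial (edgeVec e) (edgeWt s t y e))

/-- The interaction of the charges, `∏_{i<k} (y_k - y_i) ^ (2 s_i s_k)`, written with logarithms
(the diagonal terms vanish since `log 0 = 0`). -/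
def vertexProd {n : ℕ} (s y : Fin n → ℝ) : ℝ :=
  Real.exp (∑ a, ∑ b, s a * s b * Real.log (y b - y a))

/-- The correlation of `Q`: the coefficient extraction `Q ↦ U(y) · [X^m] (Q · P_y)`. -/
def corr {n : ℕ} (s t : Fin n → ℝ) (m : Fin n →₀ ℕ) (y : Fin n → ℝ) :
    MvPolynomial (Fin n) ℝ →+ ℝ where
  toFun Q := vertexProd s y * (Q * genPoly s t y).coeff m
  map_zero' := by simp
  map_add' Q Q' := by rw [add_mul, MvPolynomial.coeff_add, mul_add]

lemma corr_apply {n : ℕ} (s t : Fin n → ℝ) (m : Fin n →₀ ℕ) (y : Fin n → ℝ)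
    (Q : MvPolynomial (Fin n) ℝ) :
    corr s t m y Q = vertexProd s y * (Q * genPoly s t y).coeff m := rfl

/-- The charges as constant polynomials. -/
def pS {n : ℕ} (s : Fin n → ℝ) (i : Fin n) : MvPolynomial (Fin n) ℝ := MvPolynomial.C (s i)

/-- The nilpotent dipole variables `t_i X_i`. -/
def pT {n : ℕ} (t : Fin n → ℝ) (i : Fin n) : MvPolynomial (Fin n) ℝ :=
  MvPolynomial.C (t i) * MvPolynomial.X i

/-- The propagators `1 / (y_i - y_m)` as constant polynomials. -/
def pR {n : ℕ} (y : Fin n → ℝ) (i m : Fin n) : MvPolynomial (Fin n) ℝ :=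
  MvPolynomial.C ((y i - y m)⁻¹)

lemma pR_antisymm {n : ℕ} (y : Fin n → ℝ) (i m : Fin n) : pR y i m = - pR y m i := by
  unfold pR
  rw [← map_neg, ← inv_neg, neg_sub]

lemma pR_self {n : ℕ} (y : Fin n → ℝ) (i : Fin n) : pR y i i = 0 := by
  simp [pR]

lemma pR_three {n : ℕ} {y : Fin n → ℝ} (hy : y ∈ chamber n) (j i m : Fin n) (hi : i ≠ j)
    (hm : m ≠ j) (him : i ≠ m) :
    pR y i m * (pR y i j - pR y m j) + pR y i j * pR y m j = 0 := by
  unfold pR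
  rw [← map_sub, ← map_mul, ← map_mul, ← map_add, ← map_zero MvPolynomial.C]
  congr 1
  have h1 := chamber_sub_ne hy hi
  have h2 := chamber_sub_ne hy hm
  have h3 := chamber_sub_ne hy him
  field_simp
  ring

lemma monomial_inl {n : ℕ} (p : Fin n × Fin n) (c : ℝ) :
    MvPolynomial.monomial (edgeVec (.inl p)) c = MvPolynomial.C c * MvPolynomial.X p.1 := by
  simp [edgeVec, MvPolynomial.C_mul_X_eq_monomial]

lemma monomial_inr {n : ℕ} (p : Fin n × Fin n) (c : ℝ) :
    MvPolynomial.monomial (edgeVec (.inr p)) c =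
      MvPolynomial.C c * MvPolynomial.X p.1 * MvPolynomial.X p.2 := by
  rw [MvPolynomial.C_mul_X_eq_monomial, MvPolynomial.X, MvPolynomial.monomial_mul, mul_one]
  rfl

lemma edgeVec_ne_zero {n : ℕ} (e : FEdge n) : ∃ i, 1 ≤ edgeVec e i := by
  rcases e with p | p
  · exact ⟨p.1, by simp [edgeVec]⟩
  · exact ⟨p.1, by simp [edgeVec]⟩

/-- Extraction of a squarefree coefficient does not see the factor `1 + θ_e X ^ v_e` next to
`X ^ v_e`. -/
lemma coeff_erase {n : ℕ} (s t y : Fin n → ℝ) {m : Fin n →₀ ℕ} (hm : ∀ i, m i ≤ 1)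
    (Q : MvPolynomial (Fin n) ℝ) (a : FEdge n → ℝ) :
    (Q * ∑ e, MvPolynomial.monomial (edgeVec e) (a e) * ∏ e' ∈ univ.erase e,
      (1 + MvPolynomial.monomial (edgeVec e') (edgeWt s t y e'))).coeff m =
    (Q * (∑ e, MvPolynomial.monomial (edgeVec e) (a e)) * genPoly s t y).coeff m := by
  rw [mul_assoc, Finset.mul_sum, Finset.sum_mul, Finset.mul_sum, MvPolynomial.coeff_sum,
    MvPolynomial.coeff_sum]
  refine Finset.sum_congr rfl fun e _ => ?_
  rw [genPoly, ← Finset.mul_prod_erase univ _ (mem_univ e)]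
  set W := ∏ e' ∈ univ.erase e, (1 + MvPolynomial.monomial (edgeVec e') (edgeWt s t y e'))
  have : Q * (MvPolynomial.monomial (edgeVec e) (a e) *
      ((1 + MvPolynomial.monomial (edgeVec e) (edgeWt s t y e)) * W)) =
      Q * (MvPolynomial.monomial (edgeVec e) (a e) * W) +
      (MvPolynomial.monomial (edgeVec e) (a e) *
        MvPolynomial.monomial (edgeVec e) (edgeWt s t y e)) * (Q * W) := by ring
  rw [this, MvPolynomial.coeff_add, MvPolynomial.monomial_mul, MvPolynomial.coeff_monomial_mul',
    if_neg, add_zero]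
  intro hle
  obtain ⟨i, hi⟩ := edgeVec_ne_zero e
  have h1 := hle i
  have h2 := hm i
  simp only [Finsupp.add_apply] at h1
  omega

lemma corr_T_sq {n : ℕ} (s t y : Fin n → ℝ) {m : Fin n →₀ ℕ} (hm : ∀ i, m i ≤ 1) (i : Fin n)
    (Q : MvPolynomial (Fin n) ℝ) : corr s t m y (Q * pT t i ^ 2) = 0 := by
  rw [corr_apply]
  have e : Q * pT t i ^ 2 * genPoly s t y =
      MvPolynomial.monomial (Finsupp.single i 2) (t i ^ 2) * (Q * genPoly s t y) := by
    rw [← MvPolynomial.C_mul_X_pow_eq_monomial, map_pow, pT]; ring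
  rw [e, MvPolynomial.coeff_monomial_mul', if_neg, mul_zero]
  intro hle
  have h1 := hle i
  have h2 := hm i
  simp only [Finsupp.single_eq_same] at h1
  omega

/-! ### Derivatives of correlations -/

lemma lineDeriv_coord {n : ℕ} (y : Fin n → ℝ) (i a : Fin n) :
    HasDerivAt (fun r : ℝ => (y + r • (Pi.single i 1 : Fin n → ℝ)) a)
      ((Pi.single i 1 : Fin n → ℝ) a) 0 := by
  simp only [Pi.add_apply, Pi.smul_apply, smul_eq_mul]
  simpa using ((hasDerivAt_id (0 : ℝ)).mul_const ((Pi.single i 1 : Fin n → ℝ) a)).const_add (y a)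

lemma lineDeriv_inv {n : ℕ} {y : Fin n → ℝ} (hy : y ∈ chamber n) (i a b : Fin n) :
    HasLineDerivAt ℝ (fun z : Fin n → ℝ => (z a - z b)⁻¹)
      (-((y a - y b)⁻¹ ^ 2) * ((Pi.single i 1 : Fin n → ℝ) a - (Pi.single i 1 : Fin n → ℝ) b))
      y (Pi.single i 1) := by
  unfold HasLineDerivAt
  by_cases h : a = b
  · subst h
    simpa using hasDerivAt_const (0 : ℝ) (0 : ℝ)
  · have h0 := chamber_sub_ne hy h
    have := ((lineDeriv_coord y i a).sub (lineDeriv_coord y i b)).fun_inv (by simpa using h0)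
    refine this.congr_deriv ?_
    simp only [Pi.sub_apply, zero_smul, add_zero]
    field_simp

lemma lineDeriv_log {n : ℕ} {y : Fin n → ℝ} (hy : y ∈ chamber n) (i a b : Fin n) :
    HasLineDerivAt ℝ (fun z : Fin n → ℝ => Real.log (z b - z a))
      (((Pi.single i 1 : Fin n → ℝ) b - (Pi.single i 1 : Fin n → ℝ) a) * (y b - y a)⁻¹)
      y (Pi.single i 1) := by
  unfold HasLineDerivAt
  by_cases h : b = a
  · subst h
    simpa using hasDerivAt_const (0 : ℝ) (0 : ℝ)
  · have h0 := chamber_sub_ne hy h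
    have := ((lineDeriv_coord y i b).fun_sub (lineDeriv_coord y i a)).log (by simpa using h0)
    refine this.congr_deriv ?_
    simp only [zero_smul, add_zero, div_eq_mul_inv]

lemma lineDeriv_vertexProd {n : ℕ} (s : Fin n → ℝ) {y : Fin n → ℝ} (hy : y ∈ chamber n)
    (i : Fin n) :
    HasLineDerivAt ℝ (vertexProd s) (vertexProd s y * ∑ m, 2 * s i * s m * (y i - y m)⁻¹)
      y (Pi.single i 1) := by
  have h1 : HasDerivAt (fun r : ℝ => ∑ a, ∑ b, s a * s b *
      Real.log ((y + r • (Pi.single i 1 : Fin n → ℝ)) b -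
        (y + r • (Pi.single i 1 : Fin n → ℝ)) a)) (∑ a, ∑ b, s a * s b *
      (((Pi.single i 1 : Fin n → ℝ) b - (Pi.single i 1 : Fin n → ℝ) a) * (y b - y a)⁻¹)) 0 :=
    HasDerivAt.fun_sum fun a _ => HasDerivAt.fun_sum fun b _ =>
      HasDerivAt.const_mul _ (lineDeriv_log hy i a b)
  have h2 := h1.exp
  unfold HasLineDerivAt
  refine h2.congr_deriv ?_
  simp only [zero_smul, add_zero]
  rw [vertexProd]
  congr 1
  simp only [sub_mul, mul_sub, Finset.sum_sub_distrib, Pi.single_apply, ite_mul, mul_ite, one_mul,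
    zero_mul, mul_zero, Finset.sum_ite_eq', mem_univ, if_true]
  rw [Finset.sum_comm (γ := Fin n)]
  simp only [Finset.sum_ite_eq', mem_univ, if_true]
  rw [← Finset.sum_sub_distrib]
  refine Finset.sum_congr rfl fun m _ => ?_
  rw [← neg_sub (y i) (y m), inv_neg]; ring

lemma contDiffOn_propagator {n : ℕ} (a b : Fin n) :
    ContDiffOn ℝ (⊤ : ℕ∞) (fun z : Fin n → ℝ => (z a - z b)⁻¹) (chamber n) := by
  by_cases h : a = b
  · subst h
    simpa using contDiffOn_const
  · exact ContDiffOn.inv (by fun_prop) fun y hy => chamber_sub_ne hy h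

lemma contDiffOn_vertexProd {n : ℕ} (s : Fin n → ℝ) :
    ContDiffOn ℝ (⊤ : ℕ∞) (vertexProd s) (chamber n) := by
  unfold vertexProd
  refine ContDiffOn.exp (ContDiffOn.sum fun a _ => ContDiffOn.sum fun b _ => ?_)
  refine contDiffOn_const.mul ?_
  by_cases h : b = a
  · subst h
    simpa using contDiffOn_const
  · exact ContDiffOn.log (by fun_prop) fun y hy => chamber_sub_ne hy h

/-- The partial derivative of the weight of an edge in the `i`-th coordinate. -/
def edgeWtDeriv {n : ℕ} (s t y : Fin n → ℝ) (i : Fin n) : FEdge n → ℝ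
  | .inl p => 2 * t p.1 * s p.2 * (-((y p.1 - y p.2)⁻¹ ^ 2) *
      ((Pi.single i 1 : Fin n → ℝ) p.1 - (Pi.single i 1 : Fin n → ℝ) p.2))
  | .inr p => t p.1 * t p.2 * (2 * (y p.1 - y p.2)⁻¹ * (-((y p.1 - y p.2)⁻¹ ^ 2) *
      ((Pi.single i 1 : Fin n → ℝ) p.1 - (Pi.single i 1 : Fin n → ℝ) p.2)))

lemma lineDeriv_edgeWt {n : ℕ} (s t : Fin n → ℝ) {y : Fin n → ℝ} (hy : y ∈ chamber n)
    (i : Fin n) (e : FEdge n) :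
    HasLineDerivAt ℝ (fun z => edgeWt s t z e) (edgeWtDeriv s t y i e) y (Pi.single i 1) := by
  rcases e with p | p
  · exact HasDerivAt.const_mul _ (lineDeriv_inv hy i p.1 p.2)
  · have := HasDerivAt.const_mul (t p.1 * t p.2) (HasDerivAt.fun_pow (lineDeriv_inv hy i p.1 p.2) 2)
    refine HasDerivAt.congr_deriv this ?_
    simp [edgeWtDeriv]

lemma contDiffOn_edgeWt {n : ℕ} (s t : Fin n → ℝ) (e : FEdge n) :
    ContDiffOn ℝ (⊤ : ℕ∞) (fun z => edgeWt s t z e) (chamber n) := by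
  rcases e with p | p
  · exact contDiffOn_const.mul (contDiffOn_propagator p.1 p.2)
  · exact contDiffOn_const.mul ((contDiffOn_propagator p.1 p.2).pow 2)

lemma monomial_eq_mul {n : ℕ} (v : Fin n →₀ ℕ) (c : ℝ) :
    MvPolynomial.monomial v c = MvPolynomial.C c * MvPolynomial.monomial v 1 := by
  rw [MvPolynomial.C_mul_monomial, mul_one]

lemma coeffSmooth_genPoly {n : ℕ} (s t : Fin n → ℝ) : CoeffSmooth (genPoly s t) := by
  refine CoeffSmooth.prod _ fun e _ => (CoeffSmooth.const 1).add ?_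
  have h := (CoeffSmooth.C (contDiffOn_edgeWt s t e)).mul
    (CoeffSmooth.const (MvPolynomial.monomial (edgeVec e) 1))
  simp only [← monomial_eq_mul] at h
  exact h

lemma coeffDeriv_genPoly {n : ℕ} (s t : Fin n → ℝ) {y : Fin n → ℝ} (hy : y ∈ chamber n)
    (i : Fin n) :
    CoeffDeriv i (genPoly s t) (∑ e, MvPolynomial.monomial (edgeVec e) (edgeWtDeriv s t y i e) *
      ∏ e' ∈ univ.erase e, (1 + MvPolynomial.monomial (edgeVec e') (edgeWt s t y e'))) y := by
  have := prod_rule (Pi.evalRingHom (fun _ : Fin n → ℝ => MvPolynomial (Fin n) ℝ) y)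
    (fun q q' => CoeffDeriv i q q' y) (CoeffDeriv.const 1)
    (fun b b' a a' h h' => h.mul h') univ
    (fun e z => 1 + MvPolynomial.monomial (edgeVec e) (edgeWt s t z e))
    (fun e => MvPolynomial.monomial (edgeVec e) (edgeWtDeriv s t y i e)) ?_
  · have hg : genPoly s t = ∏ e, fun z : Fin n → ℝ =>
        (1 + MvPolynomial.monomial (edgeVec e) (edgeWt s t z e) : MvPolynomial (Fin n) ℝ) := by
      funext z
      simp [genPoly]
    rw [hg]
    simpa only [Pi.evalRingHom_apply] using this
  · intro e _
    have h1 : CoeffDeriv i (fun z => MvPolynomial.monomial (edgeVec e) (edgeWt s t z e))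
        (MvPolynomial.monomial (edgeVec e) (edgeWtDeriv s t y i e)) y := by
      have := (CoeffDeriv.C (lineDeriv_edgeWt s t hy i e)).mul
        (CoeffDeriv.const (MvPolynomial.monomial (edgeVec e) 1))
      simp only [← monomial_eq_mul, mul_zero, add_zero] at this
      exact this
    exact ((CoeffDeriv.const 1).add h1).congr (by simp)

lemma wardGamma_eq_edges {n : ℕ} (s t y : Fin n → ℝ) (i : Fin n) :
    wardGamma (pS s) (pT t) (pR y) i = MvPolynomial.C (∑ m, 2 * s i * s m * (y i - y m)⁻¹) +
      ∑ e, MvPolynomial.monomial (edgeVec e) (edgeWtDeriv s t y i e) := by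
  rw [Fintype.sum_sum_type, Fintype.sum_prod_type, Fintype.sum_prod_type]
  simp only [monomial_inl, monomial_inr, edgeWtDeriv]
  have h1 : ∀ a b : Fin n, MvPolynomial.C (2 * t a * s b * (-((y a - y b)⁻¹ ^ 2) *
      ((Pi.single i 1 : Fin n → ℝ) a - (Pi.single i 1 : Fin n → ℝ) b))) * MvPolynomial.X a =
      (if b = i then 2 * pT t a * pS s b * pR y a b ^ 2 else 0) -
      (if a = i then 2 * pT t a * pS s b * pR y a b ^ 2 else 0) := by
    intro a b
    simp only [Pi.single_apply, pT, pS, pR]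
    split_ifs <;> simp only [map_mul, map_neg, map_pow, map_sub, map_zero, map_one, map_ofNat] <;>
      ring
  have h2 : ∀ a b : Fin n, MvPolynomial.C (t a * t b * (2 * (y a - y b)⁻¹ * (-((y a - y b)⁻¹ ^ 2) *
      ((Pi.single i 1 : Fin n → ℝ) a - (Pi.single i 1 : Fin n → ℝ) b)))) * MvPolynomial.X a *
      MvPolynomial.X b =
      (if b = i then 2 * pT t a * pT t b * pR y a b ^ 3 else 0) -
      (if a = i then 2 * pT t a * pT t b * pR y a b ^ 3 else 0) := by
    intro a b
    simp only [Pi.single_apply, pT, pR]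
    split_ifs <;> simp only [map_mul, map_neg, map_pow, map_sub, map_zero, map_one, map_ofNat] <;>
      ring
  simp only [h1, h2, Finset.sum_sub_distrib]
  rw [Finset.sum_comm (f := fun a b => if a = i then 2 * pT t a * pS s b * pR y a b ^ 2 else 0),
    Finset.sum_comm (f := fun a b => if a = i then 2 * pT t a * pT t b * pR y a b ^ 3 else 0)]
  simp only [Finset.sum_ite_eq', mem_univ, if_true]
  rw [← Finset.sum_sub_distrib, ← Finset.sum_sub_distrib, map_sum, ← Finset.sum_add_distrib,
    ← Finset.sum_add_distrib, wardGamma]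
  refine Finset.sum_congr rfl fun m _ => ?_
  rw [pR_antisymm y m i]
  simp only [pS, pR, map_mul, map_ofNat]
  ring

/-- Smoothness of correlations. -/
lemma contDiffOn_corr {n : ℕ} (s t : Fin n → ℝ) (m : Fin n →₀ ℕ)
    {Q : (Fin n → ℝ) → MvPolynomial (Fin n) ℝ} (hQ : CoeffSmooth Q) :
    ContDiffOn ℝ (⊤ : ℕ∞) (fun z => corr s t m z (Q z)) (chamber n) := by
  simp only [corr_apply]
  exact (contDiffOn_vertexProd s).mul ((hQ.mul (coeffSmooth_genPoly s t)) m)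

/-- Differentiating a correlation inserts `Γ_i`. -/
lemma pd_corr {n : ℕ} (s t : Fin n → ℝ) {m : Fin n →₀ ℕ} (hm : ∀ i, m i ≤ 1)
    {y : Fin n → ℝ} (hy : y ∈ chamber n) {i : Fin n}
    {Q : (Fin n → ℝ) → MvPolynomial (Fin n) ℝ} {Q' : MvPolynomial (Fin n) ℝ}
    (hQ : CoeffSmooth Q) (hQ' : CoeffDeriv i Q Q' y) :
    pd i (fun z => corr s t m z (Q z)) y =
      corr s t m y (Q' + Q y * wardGamma (pS s) (pT t) (pR y) i) := by
  have hd : DifferentiableAt ℝ (fun z => corr s t m z (Q z)) y :=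
    ((contDiffOn_corr s t m hQ).contDiffAt ((isOpen_chamber n).mem_nhds hy)).differentiableAt
      (by simp)
  unfold pd
  rw [← hd.lineDeriv_eq_fderiv]
  refine HasLineDerivAt.lineDeriv ?_
  have := HasDerivAt.fun_mul (lineDeriv_vertexProd s hy i)
    ((hQ'.mul (coeffDeriv_genPoly s t hy i)) m)
  simp only [zero_smul, add_zero] at this
  refine HasDerivAt.congr_deriv this ?_
  rw [MvPolynomial.coeff_add, coeff_erase s t y hm, corr_apply, wardGamma_eq_edges]
  have hsplit : ∀ (c : ℝ) (E : MvPolynomial (Fin n) ℝ),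
      (Q' + Q y * (MvPolynomial.C c + E)) * genPoly s t y =
        Q' * genPoly s t y + (MvPolynomial.C c * (Q y * genPoly s t y)
          + Q y * E * genPoly s t y) := fun c E => by ring
  rw [hsplit, MvPolynomial.coeff_add, MvPolynomial.coeff_add, MvPolynomial.coeff_C_mul]
  ring

/-! ### The Wick relations -/

/-- The Euler operator `X_i ∂_i`. -/
def eulerOp {n : ℕ} (i : Fin n) (Q : MvPolynomial (Fin n) ℝ) : MvPolynomial (Fin n) ℝ :=
  MvPolynomial.X i * MvPolynomial.pderiv i Q

lemma eulerOp_mul {n : ℕ} (i : Fin n) (Q Q' : MvPolynomial (Fin n) ℝ) :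
    eulerOp i (Q * Q') = eulerOp i Q * Q' + Q * eulerOp i Q' := by
  simp only [eulerOp, Derivation.leibniz, smul_eq_mul]; ring

lemma eulerOp_add {n : ℕ} (i : Fin n) (Q Q' : MvPolynomial (Fin n) ℝ) :
    eulerOp i (Q + Q') = eulerOp i Q + eulerOp i Q' := by
  simp only [eulerOp, map_add]; ring

lemma eulerOp_sum {n : ℕ} {κ : Type*} (i : Fin n) (I : Finset κ)
    (f : κ → MvPolynomial (Fin n) ℝ) :
    eulerOp i (∑ k ∈ I, f k) = ∑ k ∈ I, eulerOp i (f k) := by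
  simp only [eulerOp, map_sum, Finset.mul_sum]

lemma eulerOp_C {n : ℕ} (i : Fin n) (c : ℝ) : eulerOp i (MvPolynomial.C c) = 0 := by
  simp [eulerOp]

lemma eulerOp_monomial {n : ℕ} (i : Fin n) (v : Fin n →₀ ℕ) (c : ℝ) :
    eulerOp i (MvPolynomial.monomial v c) = MvPolynomial.monomial v (v i * c) := by
  rw [eulerOp, MvPolynomial.X_mul_pderiv_monomial]
  simp [nsmul_eq_mul, MvPolynomial.smul_monomial]

lemma coeff_eulerOp {n : ℕ} (i : Fin n) (Q : MvPolynomial (Fin n) ℝ) (m : Fin n →₀ ℕ) :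
    (eulerOp i Q).coeff m = m i * Q.coeff m := by
  induction Q using MvPolynomial.induction_on' with
  | monomial v c =>
    rw [eulerOp_monomial, MvPolynomial.coeff_monomial, MvPolynomial.coeff_monomial]
    split_ifs with h
    · rw [h]
    · simp
  | add p q hp hq => rw [eulerOp_add, MvPolynomial.coeff_add, hp, hq, MvPolynomial.coeff_add]; ring

lemma wardH_eq_edges {n : ℕ} (s t y : Fin n → ℝ) (i : Fin n) (hs : s i = 0) :
    wardH (pS s) (pT t) (pR y) i =
      ∑ e, MvPolynomial.monomial (edgeVec e) (edgeVec e i * edgeWt s t y e) := by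
  rw [Fintype.sum_sum_type, Fintype.sum_prod_type, Fintype.sum_prod_type]
  simp only [monomial_inl, monomial_inr, edgeWt]
  have h1 : ∀ a b : Fin n, MvPolynomial.C ((edgeVec (.inl (a, b)) i : ℝ) *
      (2 * t a * s b * (y a - y b)⁻¹)) * MvPolynomial.X a =
      if a = i then 2 * pT t a * pS s b * pR y a b else 0 := by
    intro a b
    simp only [edgeVec, Finsupp.single_apply, pT, pS, pR]
    split_ifs <;> simp only [map_mul, map_ofNat, Nat.cast_one, Nat.cast_zero, map_one, map_zero] <;>
      ring
  have h2 : ∀ a b : Fin n, MvPolynomial.C ((edgeVec (.inr (a, b)) i : ℝ) *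
      (t a * t b * (y a - y b)⁻¹ ^ 2)) * MvPolynomial.X a * MvPolynomial.X b =
      (if a = i then pT t a * pT t b * pR y a b ^ 2 else 0) +
      (if b = i then pT t a * pT t b * pR y a b ^ 2 else 0) := by
    intro a b
    simp only [edgeVec, Finsupp.add_apply, Finsupp.single_apply, pT, pR]
    split_ifs <;> simp only [map_mul, map_pow, map_add, Nat.cast_add, Nat.cast_one, Nat.cast_zero,
      map_one, map_zero] <;> ring
  simp only [h1, h2, Finset.sum_add_distrib]
  rw [Finset.sum_comm (f := fun a b => if a = i then 2 * pT t a * pS s b * pR y a b else 0),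
    Finset.sum_comm (f := fun a b => if a = i then pT t a * pT t b * pR y a b ^ 2 else 0)]
  simp only [Finset.sum_ite_eq', mem_univ, if_true]
  rw [← Finset.sum_add_distrib, ← Finset.sum_add_distrib, wardH]
  have : pS s i = 0 := by simp [pS, hs]
  rw [this, zero_pow two_ne_zero, zero_add]
  refine Finset.sum_congr rfl fun m _ => ?_
  rw [pR_antisymm y m i]
  ring

/-- Each site carries either a unit charge or a dipole, the latter being the case exactly at the
variables that occur in the extracted monomial. -/
def SiteData {n : ℕ} (s t : Fin n → ℝ) (m : Fin n →₀ ℕ) : Prop :=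
  ∀ i, (t i = 0 ∧ s i ^ 2 = 1 ∧ m i = 0) ∨ (s i = 0 ∧ m i = 1)

lemma SiteData.le_one {n : ℕ} {s t : Fin n → ℝ} {m : Fin n →₀ ℕ} (h : SiteData s t m)
    (i : Fin n) : m i ≤ 1 := by
  rcases h i with h | h <;> omega

/-- The Wick relation: Euler's identity in `X_i` at a dipole, trivial at a charge. -/
lemma corr_wick {n : ℕ} {s t : Fin n → ℝ} {m : Fin n →₀ ℕ} (h : SiteData s t m)
    (y : Fin n → ℝ) (i : Fin n) (Q : MvPolynomial (Fin n) ℝ) :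
    corr s t m y Q = corr s t m y (eulerOp i Q + Q * wardH (pS s) (pT t) (pR y) i) := by
  simp only [corr_apply]
  congr 1
  rcases h i with ⟨h1, h2, h3⟩ | ⟨h1, h2⟩
  · have hH : wardH (pS s) (pT t) (pR y) i = 1 := by
      rw [wardH, pS, ← map_pow, h2]
      simp [pT, h1]
    rw [hH, mul_one, add_mul, MvPolynomial.coeff_add, eulerOp, mul_assoc,
      MvPolynomial.coeff_X_mul', if_neg (by simp [h3]), zero_add]
  · have e1 := coeff_eulerOp i (Q * genPoly s t y) m
    rw [h2, Nat.cast_one, one_mul] at e1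
    have hP : eulerOp i (genPoly s t y) = ∑ e, MvPolynomial.monomial (edgeVec e)
        (edgeVec e i * edgeWt s t y e) * ∏ e' ∈ univ.erase e,
        (1 + MvPolynomial.monomial (edgeVec e') (edgeWt s t y e')) := by
      have hmul : ∀ b b' a a' : MvPolynomial (Fin n) ℝ, eulerOp i b = a → eulerOp i b' = a' →
          eulerOp i (b * b') = a * RingHom.id _ b' + RingHom.id _ b * a' := by
        rintro b b' a a' rfl rfl
        exact eulerOp_mul i b b'
      have hfac : ∀ e ∈ (univ : Finset (FEdge n)),
          eulerOp i (1 + MvPolynomial.monomial (edgeVec e) (edgeWt s t y e)) =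
            MvPolynomial.monomial (edgeVec e) (edgeVec e i * edgeWt s t y e) := by
        intro e _
        rw [eulerOp_add, eulerOp_monomial, ← map_one MvPolynomial.C, eulerOp_C, zero_add]
      have := prod_rule (RingHom.id (MvPolynomial (Fin n) ℝ)) (fun q q' => eulerOp i q = q')
        (by rw [← map_one MvPolynomial.C, eulerOp_C]) hmul univ
        (fun e => 1 + MvPolynomial.monomial (edgeVec e) (edgeWt s t y e))
        (fun e => MvPolynomial.monomial (edgeVec e) (edgeVec e i * edgeWt s t y e)) hfac
      simp only [RingHom.id_apply] at this
      exact this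
    rw [← e1, eulerOp_mul, MvPolynomial.coeff_add, hP, coeff_erase s t y h.le_one,
      wardH_eq_edges s t y i h1, add_mul, MvPolynomial.coeff_add]

/-! ### The differential equation for the fused conformal blocks -/

section Currents

variable {n : ℕ} {S T : Fin n → MvPolynomial (Fin n) ℝ} {i j : Fin n} {y : Fin n → ℝ}
  {d : Fin n → MvPolynomial (Fin n) ℝ}

lemma CoeffDeriv.wJ0 (h : ∀ m, CoeffDeriv i (fun z => pR z m j) (d m) y) :
    CoeffDeriv i (fun z => wJ0 S T (fun m => pR z m j))
      (∑ m, (-(S m * d m) + 2 * T m * pR y m j * d m)) y := by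
  refine CoeffDeriv.sum _ fun m _ => ?_
  refine ((h m).const_mul (S m)).neg.add ((((h m).pow 2).const_mul (T m)).congr ?_)
  push_cast; ring

lemma CoeffDeriv.wJ1 (h : ∀ m, CoeffDeriv i (fun z => pR z m j) (d m) y) :
    CoeffDeriv i (fun z => wJ1 S T (fun m => pR z m j))
      (∑ m, (-(2 * S m * pR y m j * d m) + 6 * T m * pR y m j ^ 2 * d m)) y := by
  refine CoeffDeriv.sum _ fun m _ => ?_
  refine ((((h m).pow 2).const_mul (S m)).neg.congr ?_).add
    ((((h m).pow 3).const_mul (2 * T m)).congr ?_) <;> push_cast <;> ring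

lemma CoeffDeriv.wJ2 (h : ∀ m, CoeffDeriv i (fun z => pR z m j) (d m) y) :
    CoeffDeriv i (fun z => wJ2 S T (fun m => pR z m j))
      (∑ m, (-(6 * S m * pR y m j ^ 2 * d m) + 24 * T m * pR y m j ^ 3 * d m)) y := by
  refine CoeffDeriv.sum _ fun m _ => ?_
  refine ((((h m).pow 3).const_mul (2 * S m)).neg.congr ?_).add
    ((((h m).pow 4).const_mul (6 * T m)).congr ?_) <;> push_cast <;> ring

lemma coeffDeriv_pR_self (hy : y ∈ chamber n) (m : Fin n) :
    CoeffDeriv j (fun z => pR z m j) (pR y m j ^ 2) y := by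
  refine (CoeffDeriv.C (lineDeriv_inv hy j m j)).congr ?_
  rw [pR, ← map_pow]
  congr 1
  by_cases h : m = j
  · subst h; simp
  · simp [h]

lemma coeffDeriv_pR_other (hy : y ∈ chamber n) (hij : i ≠ j) (m : Fin n) :
    CoeffDeriv i (fun z => pR z m j) (if m = i then - pR y i j ^ 2 else 0) y := by
  refine (CoeffDeriv.C (lineDeriv_inv hy i m j)).congr ?_
  by_cases h : m = i
  · subst h; simp [pR, Ne.symm hij, ← map_pow]
  · simp [h, Ne.symm hij]

lemma coeffSmooth_pR (m : Fin n) : CoeffSmooth (fun z => pR z m j) :=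
  CoeffSmooth.C (contDiffOn_propagator m j)

lemma CoeffSmooth.wJ0 : CoeffSmooth (fun z => wJ0 S T (fun m => pR z m j)) :=
  CoeffSmooth.sum _ fun m _ => (((CoeffSmooth.const (S m)).mul (coeffSmooth_pR m)).neg).add
    ((CoeffSmooth.const (T m)).mul ((coeffSmooth_pR m).pow 2))

lemma CoeffSmooth.wJ1 : CoeffSmooth (fun z => wJ1 S T (fun m => pR z m j)) :=
  CoeffSmooth.sum _ fun m _ => (((CoeffSmooth.const (S m)).mul ((coeffSmooth_pR m).pow 2)).neg).add
    ((CoeffSmooth.const (2 * T m)).mul ((coeffSmooth_pR m).pow 3))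

lemma CoeffSmooth.wJ2 : CoeffSmooth (fun z => wJ2 S T (fun m => pR z m j)) :=
  CoeffSmooth.sum _ fun m _ =>
    (((CoeffSmooth.const (2 * S m)).mul ((coeffSmooth_pR m).pow 3)).neg).add
    ((CoeffSmooth.const (6 * T m)).mul ((coeffSmooth_pR m).pow 4))

lemma coeffDeriv_wJ0_self (hy : y ∈ chamber n) :
    CoeffDeriv j (fun z => wJ0 S T (fun m => pR z m j)) (wJ1 S T (fun m => pR y m j)) y := by
  refine (CoeffDeriv.wJ0 (coeffDeriv_pR_self hy)).congr ?_
  exact Finset.sum_congr rfl fun m _ => by ring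

lemma coeffDeriv_wJ1_self (hy : y ∈ chamber n) :
    CoeffDeriv j (fun z => wJ1 S T (fun m => pR z m j)) (wJ2 S T (fun m => pR y m j)) y := by
  refine (CoeffDeriv.wJ1 (coeffDeriv_pR_self hy)).congr ?_
  exact Finset.sum_congr rfl fun m _ => by ring

lemma coeffDeriv_wJ2_self (hy : y ∈ chamber n) :
    CoeffDeriv j (fun z => wJ2 S T (fun m => pR z m j)) (3 * wJ3 S T (fun m => pR y m j)) y := by
  refine (CoeffDeriv.wJ2 (coeffDeriv_pR_self hy)).congr ?_
  rw [wJ3, Finset.mul_sum]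
  exact Finset.sum_congr rfl fun m _ => by ring

end Currents

lemma pd_congr {n : ℕ} {f g : (Fin n → ℝ) → ℝ} (h : ∀ z ∈ chamber n, f z = g z) (i : Fin n)
    {y : Fin n → ℝ} (hy : y ∈ chamber n) : pd i f y = pd i g y := by
  unfold pd
  rw [Filter.EventuallyEq.fderiv_eq]
  exact Filter.eventually_of_mem ((isOpen_chamber n).mem_nhds hy) h

lemma corr_C_mul {n : ℕ} (s t : Fin n → ℝ) (m : Fin n →₀ ℕ) (y : Fin n → ℝ) (c : ℝ)
    (Q : MvPolynomial (Fin n) ℝ) : corr s t m y (MvPolynomial.C c * Q) = c * corr s t m y Q := by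
  rw [corr_apply, corr_apply, mul_assoc, MvPolynomial.coeff_C_mul]; ring

lemma eulerOp_C_mul {n : ℕ} (i : Fin n) (c : ℝ) (Q : MvPolynomial (Fin n) ℝ) :
    eulerOp i (MvPolynomial.C c * Q) = MvPolynomial.C c * eulerOp i Q := by
  rw [eulerOp_mul, eulerOp_C, zero_mul, zero_add]

lemma eulerOp_pT {n : ℕ} (t : Fin n → ℝ) (i m : Fin n) :
    eulerOp i (pT t m) = if m = i then pT t i else 0 := by
  rw [pT, eulerOp_C_mul, eulerOp, MvPolynomial.pderiv_X]
  split_ifs with h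
  · subst h; simp [pT]
  · simp [h]

lemma eulerOp_wJ0 {n : ℕ} (s t y : Fin n → ℝ) (i j : Fin n) :
    eulerOp i (wJ0 (pS s) (pT t) (fun m => pR y m j)) = pT t i * pR y i j ^ 2 := by
  rw [wJ0, eulerOp_sum, Finset.sum_eq_single i]
  · have : -(pS s i * pR y i j) + pT t i * pR y i j ^ 2 =
        MvPolynomial.C (-(s i * (y i - y j)⁻¹)) + MvPolynomial.C ((y i - y j)⁻¹ ^ 2) * pT t i := by
      simp only [pS, pR, map_neg, map_mul, map_pow]; ring
    rw [this, eulerOp_add, eulerOp_C, eulerOp_C_mul, eulerOp_pT, if_pos rfl, map_pow, pR]; ring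
  · intro m _ hm
    have : -(pS s m * pR y m j) + pT t m * pR y m j ^ 2 =
        MvPolynomial.C (-(s m * (y m - y j)⁻¹)) + MvPolynomial.C ((y m - y j)⁻¹ ^ 2) * pT t m := by
      simp only [pS, pR, map_neg, map_mul, map_pow]; ring
    rw [this, eulerOp_add, eulerOp_C, eulerOp_C_mul, eulerOp_pT, if_neg hm]; ring
  · simp

lemma eulerOp_wJ1 {n : ℕ} (s t y : Fin n → ℝ) (i j : Fin n) :
    eulerOp i (wJ1 (pS s) (pT t) (fun m => pR y m j)) = 2 * pT t i * pR y i j ^ 3 := by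
  have key : ∀ m, -(pS s m * pR y m j ^ 2) + 2 * pT t m * pR y m j ^ 3 =
        MvPolynomial.C (-(s m * (y m - y j)⁻¹ ^ 2)) +
        MvPolynomial.C (2 * (y m - y j)⁻¹ ^ 3) * pT t m := fun m => by
    simp only [pS, pR, map_neg, map_mul, map_pow, map_ofNat]; ring
  rw [wJ1, eulerOp_sum, Finset.sum_eq_single i]
  · rw [key, eulerOp_add, eulerOp_C, eulerOp_C_mul, eulerOp_pT, if_pos rfl, map_mul, map_pow, pR,
      map_ofNat]
    ring
  · intro m _ hm
    rw [key, eulerOp_add, eulerOp_C, eulerOp_C_mul, eulerOp_pT, if_neg hm]; ring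
  · simp

lemma eulerOp_wardGamma {n : ℕ} (s t y : Fin n → ℝ) {i j : Fin n} (hij : i ≠ j) :
    eulerOp i (wardGamma (pS s) (pT t) (pR y) j) =
      2 * pS s j * pT t i * pR y i j ^ 2 + 4 * pT t j * pT t i * pR y i j ^ 3 := by
  have h2 : (2 : MvPolynomial (Fin n) ℝ) = MvPolynomial.C 2 := by rw [map_ofNat]
  have e1 : eulerOp i (2 * pS s j) = 0 := by rw [h2, eulerOp_C_mul, pS, eulerOp_C, mul_zero]
  have e2 : eulerOp i (2 * pT t j) = 0 := by
    rw [h2, eulerOp_C_mul, eulerOp_pT, if_neg (Ne.symm hij), mul_zero]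
  rw [wardGamma_eq _ _ _ _ (pR_antisymm y), eulerOp_add, eulerOp_mul i (2 * pS s j),
    eulerOp_mul i (2 * pT t j), e1, e2, eulerOp_wJ0, eulerOp_wJ1]
  ring

/-- The left-hand side of the third-order equation in the `j`-th variable. -/
def thirdOrderOp {n : ℕ} (j : Fin n) (F : (Fin n → ℝ) → ℝ) (y : Fin n → ℝ) : ℝ :=
  pd j (pd j (pd j F)) y
    - 4 * ∑ i ∈ univ.filter (fun i : Fin n => i ≠ j),
        (pd j F y / (y i - y j) ^ 2 - pd i (pd j F) y / (y i - y j))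
    + 2 * ∑ i ∈ univ.filter (fun i : Fin n => i ≠ j),
        (2 * F y / (y i - y j) ^ 3 - pd i F y / (y i - y j) ^ 2)

/-- The fused conformal blocks solve the third-order equations. -/
theorem thirdOrderOp_corr {n : ℕ} {s t : Fin n → ℝ} {m : Fin n →₀ ℕ} (h : SiteData s t m)
    (j : Fin n) {y : Fin n → ℝ} (hy : y ∈ chamber n) :
    thirdOrderOp j (fun z => corr s t m z 1) y = 0 := by
  have hG : ∀ z, wardGamma (pS s) (pT t) (pR z) j = 2 * pS s j * wJ0 (pS s) (pT t)
      (fun m => pR z m j) + 2 * pT t j * wJ1 (pS s) (pT t) (fun m => pR z m j) :=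
    fun z => wardGamma_eq _ _ _ _ (pR_antisymm z)
  have hGs : CoeffSmooth (fun z => wardGamma (pS s) (pT t) (pR z) j) := by
    simp only [hG]
    exact ((CoeffSmooth.const _).mul CoeffSmooth.wJ0).add
      ((CoeffSmooth.const _).mul CoeffSmooth.wJ1)
  -- `Γ_j'`, the derivative of `Γ_j` in the `j`-th coordinate
  set G1 : (Fin n → ℝ) → MvPolynomial (Fin n) ℝ := fun z => 2 * pS s j * wJ1 (pS s) (pT t)
      (fun m => pR z m j) + 2 * pT t j * wJ2 (pS s) (pT t) (fun m => pR z m j) with hG1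
  have hG1s : CoeffSmooth G1 := ((CoeffSmooth.const _).mul CoeffSmooth.wJ1).add
      ((CoeffSmooth.const _).mul CoeffSmooth.wJ2)
  have hGd : ∀ z ∈ chamber n,
      CoeffDeriv j (fun z => wardGamma (pS s) (pT t) (pR z) j) (G1 z) z := by
    intro z hz
    simp only [hG]
    exact ((coeffDeriv_wJ0_self hz).const_mul _).add ((coeffDeriv_wJ1_self hz).const_mul _)
  have hG1d : ∀ z ∈ chamber n, CoeffDeriv j G1 (2 * pS s j * wJ2 (pS s) (pT t)
      (fun m => pR z m j) + 6 * pT t j * wJ3 (pS s) (pT t) (fun m => pR z m j)) z := by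
    intro z hz
    refine (((coeffDeriv_wJ1_self hz).const_mul _).add
      ((coeffDeriv_wJ2_self hz).const_mul _)).congr (by ring)
  have hGo : ∀ i, i ≠ j → CoeffDeriv i (fun z => wardGamma (pS s) (pT t) (pR z) j)
      (2 * pS s j * (pS s i * pR y i j ^ 2 - 2 * pT t i * pR y i j ^ 3) +
        2 * pT t j * (2 * pS s i * pR y i j ^ 3 - 6 * pT t i * pR y i j ^ 4)) y := by
    intro i hij
    simp only [hG]
    refine (((CoeffDeriv.wJ0 (coeffDeriv_pR_other hy hij)).const_mul _).add
      ((CoeffDeriv.wJ1 (coeffDeriv_pR_other hy hij)).const_mul _)).congr ?_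
    rw [Finset.sum_eq_single i, Finset.sum_eq_single i]
    · simp only [if_true]; ring
    · intro k _ hk; simp [hk]
    · simp
    · intro k _ hk; simp [hk]
    · simp
  have hle := h.le_one
  have d1 : ∀ i, ∀ z ∈ chamber n, pd i (fun z => corr s t m z 1) z =
      corr s t m z (wardGamma (pS s) (pT t) (pR z) i) := by
    intro i z hz
    rw [pd_corr s t hle hz (CoeffSmooth.const 1) (CoeffDeriv.const 1), zero_add, one_mul]
  have d2 : ∀ z ∈ chamber n, pd j (pd j (fun z => corr s t m z 1)) z =
      corr s t m z (G1 z + wardGamma (pS s) (pT t) (pR z) j ^ 2) := by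
    intro z hz
    rw [pd_congr (d1 j) j hz, pd_corr s t hle hz hGs (hGd z hz), sq]
  have d2o : ∀ i, i ≠ j → pd i (pd j (fun z => corr s t m z 1)) y =
      corr s t m y ((2 * pS s j * (pS s i * pR y i j ^ 2 - 2 * pT t i * pR y i j ^ 3) +
        2 * pT t j * (2 * pS s i * pR y i j ^ 3 - 6 * pT t i * pR y i j ^ 4)) +
        wardGamma (pS s) (pT t) (pR y) j * wardGamma (pS s) (pT t) (pR y) i) := by
    intro i hij
    rw [pd_congr (d1 j) i hy, pd_corr s t hle hy hGs (hGo i hij)]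
  have d3 : pd j (pd j (pd j (fun z => corr s t m z 1))) y =
      corr s t m y (2 * pS s j * wJ2 (pS s) (pT t) (fun m => pR y m j)
        + 6 * pT t j * wJ3 (pS s) (pT t) (fun m => pR y m j)
        + 3 * wardGamma (pS s) (pT t) (pR y) j * (2 * pS s j * wJ1 (pS s) (pT t)
            (fun m => pR y m j) + 2 * pT t j * wJ2 (pS s) (pT t) (fun m => pR y m j))
        + wardGamma (pS s) (pT t) (pR y) j ^ 3) := by
    rw [pd_congr d2 j hy, pd_corr s t hle hy (hG1s.add (hGs.pow 2))
      ((hG1d y hy).add ((hGd y hy).pow 2))]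
    congr 1
    simp only [hG1]
    push_cast
    ring
  have key := ward_pde (S := pS s) (T := pT t) (R := pR y) (j := j) (corr s t m y)
    (fun i Q => corr_T_sq s t y hle i Q) ?_ (pR_antisymm y) (pR_three hy j) ?_ ?_ ?_ ?_
  · rw [thirdOrderOp, d3, ← key, Finset.sum_filter, Finset.sum_filter]
    congr 1
    · congr 2
      refine Finset.sum_congr rfl fun i _ => ?_
      by_cases hij : i = j
      · subst hij; simp [pR_self]
      · rw [if_pos hij, d1 j y hy, d2o i hij]
        have e1 : ∀ Q, corr s t m y (pR y i j ^ 2 * Q) = (y i - y j)⁻¹ ^ 2 * corr s t m y Q :=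
          fun Q => by rw [pR, ← map_pow, corr_C_mul]
        have e2 : ∀ Q, corr s t m y (pR y i j * Q) = (y i - y j)⁻¹ * corr s t m y Q :=
          fun Q => by rw [pR, corr_C_mul]
        rw [e1, e2, inv_pow]
        ring
    · congr 1
      refine Finset.sum_congr rfl fun i _ => ?_
      by_cases hij : i = j
      · subst hij; simp [pR_self]
      · have e : (2 * pR y i j ^ 3 : MvPolynomial (Fin n) ℝ) =
            MvPolynomial.C (2 * (y i - y j)⁻¹ ^ 3) * 1 := by
          rw [pR, map_mul, map_pow, map_ofNat, mul_one]
        rw [if_pos hij, d1 i y hy, e, corr_C_mul, pR, ← map_pow, corr_C_mul, inv_pow, inv_pow]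
        ring
  · intro i
    rcases h i with hi | hi
    · simp [pT, hi.1]
    · simp [pS, hi.1]
  · rcases h j with hi | hi
    · left; simp [pT, pS, hi.1, ← map_pow, hi.2.1]
    · right; simp [pS, hi.1]
  · intro i
    by_cases hij : i = j
    · subst hij; simp [pR_self]
    · have eP : eulerOp i (pR y i j ^ 2 * wardGamma (pS s) (pT t) (pR y) j) =
          pR y i j ^ 2 * eulerOp i (wardGamma (pS s) (pT t) (pR y) j) := by
        rw [pR, ← map_pow, eulerOp_C_mul]
      rw [corr_wick h y i, eP, eulerOp_wardGamma s t y hij]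
  · intro i
    have e : (2 * pR y i j ^ 3 : MvPolynomial (Fin n) ℝ) =
        MvPolynomial.C (2 * (y i - y j)⁻¹ ^ 3) := by
      rw [pR, map_mul, map_pow, map_ofNat]
    rw [corr_wick h y i, e, eulerOp_C, zero_add]
  · rw [corr_wick h y j, eulerOp_mul, eulerOp_wJ0, eulerOp_wJ1, pR_self]
    congr 1
    ring

/-! ### Asymptotics of antisymmetrized products of exponentials -/

/-- The sign attached to a Boolean, `-1` for `true`. -/
def bsign (b : Bool) : ℝ := if b then -1 else 1

@[simp] lemma bsign_true : bsign true = -1 := rfl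

@[simp] lemma bsign_false : bsign false = 1 := rfl

lemma bsign_sq (b : Bool) : bsign b ^ 2 = 1 := by cases b <;> norm_num

lemma sum_bsign_pow {n : ℕ} (k : Fin n → ℕ) :
    ∑ ε : Fin n → Bool, ∏ i, bsign (ε i) ^ k i = ∏ i, (1 + (-1 : ℝ) ^ k i) := by
  have h := Finset.prod_univ_sum (fun _ : Fin n => (univ : Finset Bool))
    (fun i b => bsign b ^ k i)
  rw [Fintype.piFinset_univ] at h
  rw [← h]
  refine Finset.prod_congr rfl fun i _ => ?_
  rw [Fintype.sum_bool, bsign_true, bsign_false, one_pow, add_comm]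

lemma exp_mul_sign {w : ℝ} (hw : w ^ 2 = 1) (θ : ℝ) :
    Real.exp (θ * w) = w * Real.sinh θ + Real.cosh θ := by
  rcases sq_eq_one_iff.1 hw with rfl | rfl
  · rw [mul_one, one_mul, Real.sinh_add_cosh]
  · rw [mul_neg_one, neg_one_mul, neg_add_eq_sub, Real.cosh_sub_sinh]

/-- Antisymmetrizing over all sign changes `ε` kills every term whose parity differs from that of
`m`, so that dividing by `δ ^ m` is harmless and the limit is a coefficient of the generating
polynomial of the rescaled exponents `θ' e = lim θ e / δ ^ v e`. -/
lemma tendsto_signed_sum {X κ : Type*} [Fintype κ] {n : ℕ} {l : Filter X}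
    {δ : Fin n → X → ℝ} {θ : κ → X → ℝ} {θ' : κ → ℝ} {v : κ → Fin n →₀ ℕ} {m : Fin n →₀ ℕ}
    (hm : ∀ i, m i ≤ 1) (hv : ∀ e, ∃ i, 1 ≤ v e i)
    (hδ : ∀ i, Tendsto (δ i) l (𝓝 0)) (hδ0 : ∀ᶠ x in l, ∀ i, δ i x ≠ 0)
    (hθ : ∀ e, Tendsto (fun x => θ e x / ∏ i, δ i x ^ v e i) l (𝓝 (θ' e))) :
    Tendsto (fun x => (∏ i, δ i x ^ m i)⁻¹ * ∑ ε : Fin n → Bool, (∏ i, bsign (ε i) ^ m i) *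
        ∏ e, Real.exp (θ e x * ∏ i, bsign (ε i) ^ v e i)) l
      (𝓝 (2 ^ n * (∏ e, (1 + MvPolynomial.monomial (v e) (θ' e))).coeff m)) := by
  -- the sum of the exponent vectors of a set of edges
  set K : Finset κ → Fin n →₀ ℕ := fun E => ∑ e ∈ E, v e with hK
  have hKapp : ∀ (E : Finset κ) (i : Fin n), K E i = ∑ e ∈ E, v e i := fun E i => by
    rw [hK, Finsupp.finsetSum_apply]
  have hKprod : ∀ (E : Finset κ) (g : Fin n → ℝ),
      ∏ e ∈ E, ∏ i, g i ^ v e i = ∏ i, g i ^ K E i := by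
    intro E g
    rw [Finset.prod_comm]
    refine Finset.prod_congr rfl fun i _ => ?_
    rw [Finset.prod_pow_eq_pow_sum, hKapp]
  -- expansion of the left-hand side over sets of edges
  have hexp : ∀ x, (∏ i, δ i x ^ m i)⁻¹ * ∑ ε : Fin n → Bool, (∏ i, bsign (ε i) ^ m i) *
        ∏ e, Real.exp (θ e x * ∏ i, bsign (ε i) ^ v e i) =
      ∑ E : Finset κ, (∏ i, (1 + (-1 : ℝ) ^ (m i + K E i))) * ((∏ i, δ i x ^ m i)⁻¹ *
        ((∏ e ∈ E, Real.sinh (θ e x)) * ∏ e ∈ univ \ E, Real.cosh (θ e x))) := by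
    intro x
    have h1 : ∀ ε : Fin n → Bool, ∏ e, Real.exp (θ e x * ∏ i, bsign (ε i) ^ v e i) =
        ∑ E : Finset κ, (∏ i, bsign (ε i) ^ K E i) *
          ((∏ e ∈ E, Real.sinh (θ e x)) * ∏ e ∈ univ \ E, Real.cosh (θ e x)) := by
      intro ε
      have h2 : ∀ e, Real.exp (θ e x * ∏ i, bsign (ε i) ^ v e i) =
          (∏ i, bsign (ε i) ^ v e i) * Real.sinh (θ e x) + Real.cosh (θ e x) := by
        intro e
        refine exp_mul_sign ?_ _
        rw [← Finset.prod_pow]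
        refine Finset.prod_eq_one fun i _ => ?_
        rw [← pow_mul, mul_comm, pow_mul, bsign_sq, one_pow]
      rw [Finset.prod_congr rfl fun e _ => h2 e, Finset.prod_add, Finset.powerset_univ]
      refine Finset.sum_congr rfl fun E _ => ?_
      rw [Finset.prod_mul_distrib, hKprod E (fun i => bsign (ε i)), mul_assoc]
    simp only [h1]
    simp only [Finset.mul_sum]
    rw [Finset.sum_comm]
    refine Finset.sum_congr rfl fun E _ => ?_
    rw [← sum_bsign_pow, Finset.sum_mul]
    refine Finset.sum_congr rfl fun ε _ => ?_
    simp only [pow_add, Finset.prod_mul_distrib]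
    ring
  have hcoeff : 2 ^ n * (∏ e, (1 + MvPolynomial.monomial (v e) (θ' e))).coeff m =
      ∑ E : Finset κ, if K E = m then 2 ^ n * ∏ e ∈ E, θ' e else 0 := by
    simp only [add_comm (1 : MvPolynomial (Fin n) ℝ)]
    rw [Finset.prod_add, Finset.powerset_univ, MvPolynomial.coeff_sum, Finset.mul_sum]
    refine Finset.sum_congr rfl fun E _ => ?_
    rw [Finset.prod_const_one, mul_one, ← MvPolynomial.monomial_sum_prod,
      MvPolynomial.coeff_monomial]
    split_ifs <;> simp
  rw [hcoeff]
  simp only [hexp]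
  have hδpow : ∀ k : Fin n → ℕ, Tendsto (fun x => ∏ i, δ i x ^ k i) l (𝓝 (∏ i, 0 ^ k i)) :=
    fun k => tendsto_finsetProd _ fun i _ => (hδ i).pow (k i)
  have hθ0 : ∀ e, Tendsto (θ e) l (𝓝 0) := by
    intro e
    have h1 := (hθ e).mul (hδpow (v e))
    obtain ⟨i, hi⟩ := hv e
    rw [Finset.prod_eq_zero (mem_univ i) (zero_pow (by omega)), mul_zero] at h1
    refine h1.congr' ?_
    filter_upwards [hδ0] with x hx
    exact div_mul_cancel₀ _ (Finset.prod_ne_zero_iff.2 fun i _ => pow_ne_zero _ (hx i))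
  have hsinh : ∀ e, Tendsto (fun x => Real.sinh (θ e x) / ∏ i, δ i x ^ v e i) l (𝓝 (θ' e)) := by
    intro e
    have hc : ContinuousAt (dslope Real.sinh 0) 0 :=
      continuousAt_dslope_same.2 Real.differentiable_sinh.differentiableAt
    have h1 := (hθ e).mul (hc.tendsto.comp (hθ0 e))
    rw [dslope_same, Real.deriv_sinh, Real.cosh_zero, mul_one] at h1
    refine h1.congr fun x => ?_
    have h2 := sub_smul_dslope Real.sinh 0 (θ e x)
    rw [sub_zero, Real.sinh_zero, sub_zero, smul_eq_mul] at h2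
    rw [← h2, Function.comp_apply]
    ring
  have hcosh : ∀ e, Tendsto (fun x => Real.cosh (θ e x)) l (𝓝 1) := by
    intro e
    have := (Real.continuous_cosh.tendsto 0).comp (hθ0 e)
    rwa [Real.cosh_zero] at this
  refine tendsto_finsetSum _ fun E _ => ?_
  by_cases hpar : ∀ i, Even (m i + K E i)
  · have hle : ∀ i, m i ≤ K E i := by
      intro i
      have h1 := hm i
      obtain ⟨r, hr⟩ := hpar i
      omega
    have hN : ∏ i, (1 + (-1 : ℝ) ^ (m i + K E i)) = 2 ^ n := by
      rw [Finset.prod_congr rfl fun i _ => by rw [(hpar i).neg_one_pow]]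
      norm_num
    have h1 : Tendsto (fun x => (∏ i, δ i x ^ (K E i - m i)) *
        ((∏ e ∈ E, Real.sinh (θ e x) / ∏ i, δ i x ^ v e i) * ∏ e ∈ univ \ E, Real.cosh (θ e x)))
        l (𝓝 ((∏ i, 0 ^ (K E i - m i)) * ((∏ e ∈ E, θ' e) * ∏ e ∈ univ \ E, (1 : ℝ)))) :=
      (hδpow _).mul ((tendsto_finsetProd _ fun e _ => hsinh e).mul
        (tendsto_finsetProd _ fun e _ => hcosh e))
    rw [hN]
    have h2 : (if K E = m then 2 ^ n * ∏ e ∈ E, θ' e else 0) = 2 ^ n *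
        ((∏ i, 0 ^ (K E i - m i)) * ((∏ e ∈ E, θ' e) * ∏ e ∈ univ \ E, (1 : ℝ))) := by
      split_ifs with hKm
      · simp [hKm]
      · have : ∃ i, K E i ≠ m i := by
          by_contra hcon
          push Not at hcon
          exact hKm (Finsupp.ext hcon)
        obtain ⟨i, hi⟩ := this
        have := hle i
        rw [Finset.prod_eq_zero (mem_univ i) (zero_pow (by omega))]
        ring
    rw [h2]
    refine (h1.const_mul (2 ^ n)).congr' ?_
    filter_upwards [hδ0] with x hx
    congr 1
    rw [Finset.prod_div_distrib, hKprod E (fun i => δ i x)]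
    have h3 : ∏ i, δ i x ^ K E i = (∏ i, δ i x ^ (K E i - m i)) * ∏ i, δ i x ^ m i := by
      rw [← Finset.prod_mul_distrib]
      exact Finset.prod_congr rfl fun i _ => by rw [← pow_add, Nat.sub_add_cancel (hle i)]
    have h4 : ∏ i, δ i x ^ m i ≠ 0 := Finset.prod_ne_zero_iff.2 fun i _ => pow_ne_zero _ (hx i)
    have h5 : ∏ i, δ i x ^ (K E i - m i) ≠ 0 :=
      Finset.prod_ne_zero_iff.2 fun i _ => pow_ne_zero _ (hx i)
    rw [h3]
    field_simp
  · push Not at hpar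
    obtain ⟨i, hi⟩ := hpar
    have hN : ∏ i, (1 + (-1 : ℝ) ^ (m i + K E i)) = 0 := by
      refine Finset.prod_eq_zero (mem_univ i) ?_
      rw [(Nat.not_even_iff_odd.1 hi).neg_one_pow]
      norm_num
    have hKm : K E ≠ m := by
      rintro h
      rw [h] at hi
      exact hi ⟨m i, rfl⟩
    simp only [hN, zero_mul, if_neg hKm]
    exact tendsto_const_nhds

/-! ### Conformal blocks near the fusion point -/

/-- The two points `2j` and `2j + 1` at the site `j`. -/
def sitePt {n : ℕ} (j : Fin n) (a : Bool) : Fin (2 * n) :=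
  ⟨2 * j.val + a.toNat, by have := j.2; have := Bool.toNat_le a; omega⟩

/-- The points as pairs of a site and a Boolean. -/
def siteEquiv (n : ℕ) : Fin n × Bool ≃ Fin (2 * n) where
  toFun p := sitePt p.1 p.2
  invFun p := (⟨p.val / 2, by have := p.2; omega⟩, decide (p.val % 2 = 1))
  left_inv := by
    rintro ⟨j, a⟩
    cases a
    · simp [sitePt]
    · have : (2 * j.val + 1) / 2 = j.val := by omega
      simp [sitePt, this, Nat.add_mod]
  right_inv := by
    intro p
    apply Fin.ext
    by_cases h : p.val % 2 = 1
    · simp [sitePt, h]; omega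
    · simp [sitePt, h]; omega

lemma sum_sites {n : ℕ} (f : Fin (2 * n) → ℝ) :
    ∑ p, f p = ∑ j, (f (sitePt j false) + f (sitePt j true)) := by
  rw [← (siteEquiv n).sum_comp, Fintype.sum_prod_type]
  refine Finset.sum_congr rfl fun j _ => ?_
  rw [Fintype.sum_bool, add_comm]
  rfl

lemma forall_sites {n : ℕ} {P : Fin (2 * n) → Prop} (h : ∀ j a, P (sitePt j a)) (p) : P p := by
  obtain ⟨⟨j, a⟩, rfl⟩ := (siteEquiv n).surjective p
  exact h j a

/-- The sign sequence with values `s_j + d_j` and `s_j - d_j` at the two points of the site `j`. -/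
def siteSeq {n : ℕ} (s d : Fin n → ℝ) (p : Fin (2 * n)) : ℝ :=
  s ⟨p.val / 2, by have := p.2; omega⟩ +
    (if p.val % 2 = 1 then -1 else 1) * d ⟨p.val / 2, by have := p.2; omega⟩

lemma siteSeq_pt {n : ℕ} (s d : Fin n → ℝ) (j : Fin n) (a : Bool) :
    siteSeq s d (sitePt j a) = s j + bsign a * d j := by
  cases a
  · simp [siteSeq, sitePt]
  · have : (2 * j.val + 1) / 2 = j.val := by omega
    simp [siteSeq, sitePt, this, Nat.add_mod]

/-- The logarithm of the distance of two points; it is symmetric and vanishes on the diagonal. -/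
def logDist {k : ℕ} (x : Fin k → ℝ) (p q : Fin k) : ℝ := Real.log (x q - x p)

lemma logDist_comm {k : ℕ} (x : Fin k → ℝ) (p q : Fin k) : logDist x p q = logDist x q p := by
  rw [logDist, logDist, ← Real.log_neg_eq_log, neg_sub]

lemma logDist_self {k : ℕ} (x : Fin k → ℝ) (p : Fin k) : logDist x p p = 0 := by
  simp [logDist]

lemma cblock_eq_exp {k : ℕ} (σ : Fin k → ℝ) {x : Fin k → ℝ} (hx : x ∈ chamber k) :
    cblock σ x = Real.exp (1 / 4 * ∑ p, ∑ q, σ p * σ q * logDist x p q) := by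
  have h1 : cblock σ x = Real.exp (∑ p ∈ univ.filter (fun p : Fin k × Fin k => p.1 < p.2),
      1 / 2 * (σ p.1 * σ p.2 * logDist x p.1 p.2)) := by
    rw [Real.exp_sum, cblock]
    refine Finset.prod_congr rfl fun p hp => ?_
    rw [Real.rpow_def_of_pos (sub_pos.2 (hx _ _ (Finset.mem_filter.1 hp).2)), logDist]
    congr 1
    ring
  rw [h1]
  congr 1
  rw [Finset.sum_filter, Fintype.sum_prod_type]
  have h2 : ∀ p q : Fin k, σ p * σ q * logDist x p q =
      (if p < q then σ p * σ q * logDist x p q else 0) +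
      (if q < p then σ q * σ p * logDist x q p else 0) := by
    intro p q
    rcases lt_trichotomy p q with h | h | h
    · simp [h, h.not_gt]
    · subst h; simp [logDist_self]
    · rw [if_neg h.not_gt, if_pos h, logDist_comm]; ring
  have h3 : ∑ p, ∑ q, σ p * σ q * logDist x p q =
      2 * ∑ p, ∑ q, (if p < q then σ p * σ q * logDist x p q else 0) := by
    rw [Finset.sum_congr rfl fun p _ => Finset.sum_congr rfl fun q _ => h2 p q]
    simp only [Finset.sum_add_distrib]
    rw [Finset.sum_comm (f := fun p q => if q < p then σ q * σ p * logDist x q p else 0)]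
    ring
  rw [h3, Finset.mul_sum, Finset.mul_sum]
  refine Finset.sum_congr rfl fun p _ => ?_
  rw [Finset.mul_sum, Finset.mul_sum]
  refine Finset.sum_congr rfl fun q _ => ?_
  dsimp only
  split_ifs <;> ring

section Sites

variable {n : ℕ} (x : Fin (2 * n) → ℝ)

/-- The distance of the two points at the site `j`. -/
def siteGap (j : Fin n) : ℝ := x (sitePt j true) - x (sitePt j false)

/-- The charge-charge interaction of two sites. -/
def siteL0 (j k : Fin n) : ℝ :=
  logDist x (sitePt j false) (sitePt k false) + logDist x (sitePt j false) (sitePt k true) +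
  logDist x (sitePt j true) (sitePt k false) + logDist x (sitePt j true) (sitePt k true)

/-- The dipole-charge interaction of two sites. -/
def siteL1 (j k : Fin n) : ℝ :=
  (logDist x (sitePt j false) (sitePt k false) - logDist x (sitePt j true) (sitePt k false)) +
  (logDist x (sitePt j false) (sitePt k true) - logDist x (sitePt j true) (sitePt k true))

/-- The dipole-dipole interaction of two sites, the logarithm of a cross-ratio. -/
def siteL2 (j k : Fin n) : ℝ :=
  (logDist x (sitePt j false) (sitePt k false) + logDist x (sitePt j true) (sitePt k true)) -
  (logDist x (sitePt j false) (sitePt k true) + logDist x (sitePt j true) (sitePt k false))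

/-- The total interaction of the charges of distinct sites. -/
def siteV (s : Fin n → ℝ) : ℝ :=
  ∑ j, ∑ k, if j = k then 0 else 1 / 4 * (s j * s k * siteL0 x j k)

/-- The interaction energy of an edge before fusion. -/
def siteTheta (s d : Fin n → ℝ) : FEdge n → ℝ
  | .inl p => if p.1 = p.2 then 0 else 1 / 2 * (d p.1 * s p.2 * siteL1 x p.1 p.2)
  | .inr p => if p.1 = p.2 then 0 else 1 / 4 * (d p.1 * d p.2 * siteL2 x p.1 p.2)

lemma sum_logDist_sites (s d : Fin n → ℝ) :
    1 / 4 * ∑ p, ∑ q, siteSeq s d p * siteSeq s d q * logDist x p q =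
      ∑ j, 1 / 2 * ((s j ^ 2 - d j ^ 2) * Real.log (siteGap x j)) + siteV x s +
        ∑ e, siteTheta x s d e := by
  have key : ∀ j k : Fin n, 1 / 4 *
      ((siteSeq s d (sitePt j false) * siteSeq s d (sitePt k false) *
          logDist x (sitePt j false) (sitePt k false) +
        siteSeq s d (sitePt j false) * siteSeq s d (sitePt k true) *
          logDist x (sitePt j false) (sitePt k true)) +
       (siteSeq s d (sitePt j true) * siteSeq s d (sitePt k false) *
          logDist x (sitePt j true) (sitePt k false) +
        siteSeq s d (sitePt j true) * siteSeq s d (sitePt k true) *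
          logDist x (sitePt j true) (sitePt k true))) =
      (if j = k then 1 / 2 * ((s j ^ 2 - d j ^ 2) * Real.log (siteGap x j)) else 0) +
      (if j = k then 0 else 1 / 4 * (s j * s k * siteL0 x j k)) +
      (1 / 2 * (siteTheta x s d (.inl (j, k)) + siteTheta x s d (.inl (k, j))) +
        siteTheta x s d (.inr (j, k))) := by
    intro j k
    simp only [siteSeq_pt, bsign_true, bsign_false]
    by_cases h : j = k
    · subst h
      simp only [siteTheta, if_true, logDist_self]
      rw [logDist_comm x (sitePt j true) (sitePt j false)]
      simp only [logDist, siteGap]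
      ring
    · simp only [siteTheta, if_neg h, if_neg (Ne.symm h), siteL0, siteL1, siteL2]
      rw [logDist_comm x (sitePt k false) (sitePt j false),
        logDist_comm x (sitePt k false) (sitePt j true),
        logDist_comm x (sitePt k true) (sitePt j false),
        logDist_comm x (sitePt k true) (sitePt j true)]
      ring
  rw [sum_sites, Finset.mul_sum]
  simp only [sum_sites, ← Finset.sum_add_distrib]
  simp only [Finset.mul_sum, key]
  simp only [Finset.sum_add_distrib, ← Finset.mul_sum, Finset.sum_ite_eq, mem_univ, if_true]
  rw [Finset.sum_comm (f := fun j k => siteTheta x s d (.inl (k, j))), Fintype.sum_sum_type,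
    Fintype.sum_prod_type, Fintype.sum_prod_type, siteV]
  ring

end Sites

/-- The part of a sign sequence at each site: the charge `s`, the dipole `d` and the indicator `m`
of the dipoles. -/
def SiteSigns {n : ℕ} (s d : Fin n → ℝ) (m : Fin n →₀ ℕ) : Prop :=
  ∀ i, (d i = 0 ∧ s i ^ 2 = 1 ∧ m i = 0) ∨ (s i = 0 ∧ d i ^ 2 = 1 ∧ m i = 1)

lemma siteGap_pos {n : ℕ} {x : Fin (2 * n) → ℝ} (hx : x ∈ chamber (2 * n)) (j : Fin n) :
    0 < siteGap x j :=
  sub_pos.2 (hx _ _ (by simp [sitePt, Fin.lt_def]))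

lemma siteTheta_sign {n : ℕ} (x : Fin (2 * n) → ℝ) (s d : Fin n → ℝ) (ε : Fin n → Bool)
    (e : FEdge n) : siteTheta x s (fun j => bsign (ε j) * d j) e =
      siteTheta x s d e * ∏ i, bsign (ε i) ^ edgeVec e i := by
  have hsingle : ∀ j : Fin n, ∏ i, bsign (ε i) ^ (Finsupp.single j 1 : Fin n →₀ ℕ) i =
      bsign (ε j) := by
    intro j
    rw [Finset.prod_eq_single j]
    · simp
    · intro i _ hi; simp [Ne.symm hi]
    · simp
  rcases e with ⟨j, k⟩ | ⟨j, k⟩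
  · simp only [siteTheta, edgeVec, hsingle]
    split_ifs <;> ring
  · simp only [siteTheta, edgeVec, Finsupp.add_apply, pow_add, Finset.prod_mul_distrib, hsingle]
    split_ifs <;> ring

/-- A conformal block in terms of charges and dipoles at the sites. -/
lemma cblock_sites {n : ℕ} {s d : Fin n → ℝ} {m : Fin n →₀ ℕ} (h : SiteSigns s d m)
    {x : Fin (2 * n) → ℝ} (hx : x ∈ chamber (2 * n)) (ε : Fin n → Bool) :
    cblock (siteSeq s fun j => bsign (ε j) * d j) x =
      (∏ j, siteGap x j ^ (1 / 2 : ℝ)) * (Real.exp (siteV x s) * ((∏ j, siteGap x j ^ m j)⁻¹ *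
        ∏ e, Real.exp (siteTheta x s d e * ∏ i, bsign (ε i) ^ edgeVec e i))) := by
  rw [cblock_eq_exp _ hx, sum_logDist_sites, Real.exp_add, Real.exp_add, Real.exp_sum, Real.exp_sum]
  simp only [siteTheta_sign]
  have hfac : ∀ j, Real.exp (1 / 2 * ((s j ^ 2 - (bsign (ε j) * d j) ^ 2) *
      Real.log (siteGap x j))) = siteGap x j ^ (1 / 2 : ℝ) * (siteGap x j ^ m j)⁻¹ := by
    intro j
    have hp := siteGap_pos hx j
    rw [mul_pow, bsign_sq, Real.rpow_def_of_pos hp]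
    rcases h j with ⟨h1, h2, h3⟩ | ⟨h1, h2, h3⟩
    · rw [h1, h2, h3]
      simp [mul_comm]
    · rw [h1, h2, h3, pow_one]
      nth_rewrite 3 [← Real.exp_log hp]
      rw [← Real.exp_neg, ← Real.exp_add]
      congr 1
      ring
  rw [Finset.prod_congr rfl fun j _ => hfac j, Finset.prod_mul_distrib, Finset.prod_inv_distrib]
  ring

/-! ### The fusion limit -/

lemma tendsto_log_slope {X : Type*} {l : Filter X} {f g : X → ℝ} {c : ℝ} (hc : c ≠ 0)
    (hf : Tendsto f l (𝓝 c)) (hg : Tendsto g l (𝓝 c)) (hne : ∀ᶠ x in l, f x - g x ≠ 0) :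
    Tendsto (fun x => (Real.log (f x) - Real.log (g x)) / (f x - g x)) l (𝓝 c⁻¹) := by
  have h1 := (Real.hasStrictDerivAt_log hc).isLittleO
  have h2 := (h1.comp_tendsto (hf.prodMk_nhds hg)).tendsto_div_nhds_zero
  have h3 := h2.add_const c⁻¹
  rw [zero_add] at h3
  refine h3.congr' ?_
  filter_upwards [hne] with x hx
  simp only [Function.comp_apply, ContinuousLinearMap.toSpanSingleton_apply, smul_eq_mul]
  field_simp
  ring

section Limit

variable {N : ℕ} {y : Fin (2 * N) → ℝ}

lemma dup_sitePt (y : Fin (2 * N) → ℝ) (j : Fin (2 * N)) (a : Bool) : dup y (sitePt j a) = y j := by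
  unfold dup sitePt
  congr 1
  apply Fin.ext
  cases a
  · simp
  · simp; omega

lemma tendsto_sitePt (y : Fin (2 * N) → ℝ) (j : Fin (2 * N)) (a : Bool) :
    Tendsto (fun x : Fin (2 * (2 * N)) → ℝ => x (sitePt j a))
      (𝓝[chamber (2 * (2 * N))] dup y) (𝓝 (y j)) := by
  have h := (continuous_apply (sitePt j a)).tendsto (dup y)
  rw [dup_sitePt] at h
  exact h.mono_left nhdsWithin_le_nhds

lemma eventually_chamber (y : Fin (2 * N) → ℝ) :
    ∀ᶠ x in 𝓝[chamber (2 * (2 * N))] dup y, x ∈ chamber (2 * (2 * N)) :=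
  self_mem_nhdsWithin

lemma tendsto_sitePt_sub (y : Fin (2 * N) → ℝ) (j k : Fin (2 * N)) (a b : Bool) :
    Tendsto (fun x : Fin (2 * (2 * N)) → ℝ => x (sitePt k b) - x (sitePt j a))
      (𝓝[chamber (2 * (2 * N))] dup y) (𝓝 (y k - y j)) :=
  (tendsto_sitePt y k b).sub (tendsto_sitePt y j a)

lemma tendsto_siteGap (y : Fin (2 * N) → ℝ) (j : Fin (2 * N)) :
    Tendsto (fun x : Fin (2 * (2 * N)) → ℝ => siteGap x j)
      (𝓝[chamber (2 * (2 * N))] dup y) (𝓝 0) := by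
  simpa [siteGap] using tendsto_sitePt_sub y j j false true

lemma tendsto_siteL0 (hy : y ∈ chamber (2 * N)) {j k : Fin (2 * N)} (hjk : j ≠ k) :
    Tendsto (fun x : Fin (2 * (2 * N)) → ℝ => siteL0 x j k)
      (𝓝[chamber (2 * (2 * N))] dup y) (𝓝 (4 * Real.log (y k - y j))) := by
  have h : ∀ a b, Tendsto (fun x : Fin (2 * (2 * N)) → ℝ =>
      logDist x (sitePt j a) (sitePt k b)) (𝓝[chamber (2 * (2 * N))] dup y)
      (𝓝 (Real.log (y k - y j))) := fun a b =>
    (tendsto_sitePt_sub y j k a b).log (chamber_sub_ne hy (Ne.symm hjk))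
  have h2 := (((h false false).add (h false true)).add (h true false)).add (h true true)
  have e : Real.log (y k - y j) + Real.log (y k - y j) + Real.log (y k - y j) +
      Real.log (y k - y j) = 4 * Real.log (y k - y j) := by ring
  rw [e] at h2
  exact h2

lemma tendsto_siteL1 (hy : y ∈ chamber (2 * N)) {j k : Fin (2 * N)} (hjk : j ≠ k) :
    Tendsto (fun x : Fin (2 * (2 * N)) → ℝ => siteL1 x j k / siteGap x j)
      (𝓝[chamber (2 * (2 * N))] dup y) (𝓝 (2 * (y k - y j)⁻¹)) := by
  have h : ∀ b, Tendsto (fun x : Fin (2 * (2 * N)) → ℝ =>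
      (logDist x (sitePt j false) (sitePt k b) - logDist x (sitePt j true) (sitePt k b)) /
        siteGap x j) (𝓝[chamber (2 * (2 * N))] dup y) (𝓝 (y k - y j)⁻¹) := by
    intro b
    have hgap : ∀ x : Fin (2 * (2 * N)) → ℝ, (x (sitePt k b) - x (sitePt j false)) -
        (x (sitePt k b) - x (sitePt j true)) = siteGap x j := fun x => by rw [siteGap]; ring
    have h1 := tendsto_log_slope (chamber_sub_ne hy (Ne.symm hjk))
      (tendsto_sitePt_sub y j k false b) (tendsto_sitePt_sub y j k true b) (by
        filter_upwards [eventually_chamber y] with x hx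
        rw [hgap]
        exact (siteGap_pos hx j).ne')
    simp only [hgap] at h1
    exact h1
  have h2 := (h false).add (h true)
  rw [← two_mul] at h2
  refine h2.congr fun x => ?_
  rw [← add_div, siteL1]

lemma tendsto_siteL2 (hy : y ∈ chamber (2 * N)) {j k : Fin (2 * N)} (hjk : j ≠ k) :
    Tendsto (fun x : Fin (2 * (2 * N)) → ℝ => siteL2 x j k / (siteGap x j * siteGap x k))
      (𝓝[chamber (2 * (2 * N))] dup y) (𝓝 ((y k - y j)⁻¹ ^ 2)) := by
  have hne := chamber_sub_ne hy (Ne.symm hjk)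
  -- the difference of the two products in the cross-ratio is the product of the gaps
  have hgap : ∀ x : Fin (2 * (2 * N)) → ℝ,
      (x (sitePt k false) - x (sitePt j false)) * (x (sitePt k true) - x (sitePt j true)) -
      (x (sitePt k true) - x (sitePt j false)) * (x (sitePt k false) - x (sitePt j true)) =
        siteGap x j * siteGap x k := fun x => by simp only [siteGap]; ring
  have h1 := tendsto_log_slope (mul_ne_zero hne hne)
    ((tendsto_sitePt_sub y j k false false).mul (tendsto_sitePt_sub y j k true true))
    ((tendsto_sitePt_sub y j k false true).mul (tendsto_sitePt_sub y j k true false)) (by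
      filter_upwards [eventually_chamber y] with x hx
      rw [hgap]
      exact mul_ne_zero (siteGap_pos hx j).ne' (siteGap_pos hx k).ne')
  rw [mul_inv, ← sq] at h1
  refine h1.congr' ?_
  have hne' : ∀ a b, ∀ x ∈ chamber (2 * (2 * N)), x (sitePt k b) - x (sitePt j a) ≠ 0 := by
    intro a b x hx
    refine chamber_sub_ne hx fun h => hjk ?_
    have := (siteEquiv (2 * N)).injective (a₁ := (k, b)) (a₂ := (j, a)) h
    exact (congrArg Prod.fst this).symm
  filter_upwards [eventually_chamber y] with x hx
  rw [hgap, Real.log_mul (hne' _ _ x hx) (hne' _ _ x hx),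
    Real.log_mul (hne' _ _ x hx) (hne' _ _ x hx)]
  rfl

lemma tendsto_siteV (hy : y ∈ chamber (2 * N)) (s : Fin (2 * N) → ℝ) :
    Tendsto (fun x : Fin (2 * (2 * N)) → ℝ => Real.exp (siteV x s))
      (𝓝[chamber (2 * (2 * N))] dup y) (𝓝 (vertexProd s y)) := by
  refine (Real.continuous_exp.tendsto _).comp ?_
  refine tendsto_finsetSum _ fun j _ => tendsto_finsetSum _ fun k _ => ?_
  by_cases h : j = k
  · subst h
    simpa using tendsto_const_nhds
  · simp only [if_neg h]
    have h1 := ((tendsto_siteL0 hy h).const_mul (s j * s k)).const_mul (1 / 4)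
    have e : 1 / 4 * (s j * s k * (4 * Real.log (y k - y j))) =
      s j * s k * Real.log (y k - y j) := by ring
    rw [e] at h1
    exact h1

lemma prod_pow_edgeVec_inl {n : ℕ} (g : Fin n → ℝ) (p : Fin n × Fin n) :
    ∏ i, g i ^ edgeVec (.inl p) i = g p.1 := by
  rw [Finset.prod_eq_single p.1]
  · simp [edgeVec]
  · intro i _ hi; simp [edgeVec, Ne.symm hi]
  · simp

lemma prod_pow_edgeVec_inr {n : ℕ} (g : Fin n → ℝ) (p : Fin n × Fin n) :
    ∏ i, g i ^ edgeVec (.inr p) i = g p.1 * g p.2 := by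
  have h : ∀ i, g i ^ edgeVec (.inr p) i =
      g i ^ edgeVec (.inl (p.1, p.2)) i * g i ^ edgeVec (.inl (p.2, p.1)) i := fun i => by
    simp only [edgeVec, Finsupp.add_apply, pow_add]
  rw [Finset.prod_congr rfl fun i _ => h i, Finset.prod_mul_distrib, prod_pow_edgeVec_inl,
    prod_pow_edgeVec_inl]

/-- After rescaling, the edge energies converge to those of dipoles of moment `-d / 2`. -/
lemma tendsto_siteTheta (hy : y ∈ chamber (2 * N)) (s d : Fin (2 * N) → ℝ) (e : FEdge (2 * N)) :
    Tendsto (fun x : Fin (2 * (2 * N)) → ℝ => siteTheta x s d e / ∏ i, siteGap x i ^ edgeVec e i)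
      (𝓝[chamber (2 * (2 * N))] dup y) (𝓝 (edgeWt s (fun j => -d j / 2) y e)) := by
  rcases e with ⟨j, k⟩ | ⟨j, k⟩
  · simp only [prod_pow_edgeVec_inl, siteTheta, edgeWt]
    by_cases h : j = k
    · subst h
      simpa using tendsto_const_nhds
    · simp only [if_neg h]
      have h1 := (tendsto_siteL1 hy h).const_mul (1 / 2 * (d j * s k))
      have e : 1 / 2 * (d j * s k) * (2 * (y k - y j)⁻¹) =
          2 * (-d j / 2) * s k * (y j - y k)⁻¹ := by
        rw [← neg_sub (y j) (y k), inv_neg]; ring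
      rw [e] at h1
      exact h1.congr fun x => by ring
  · simp only [prod_pow_edgeVec_inr, siteTheta, edgeWt]
    by_cases h : j = k
    · subst h
      simpa using tendsto_const_nhds
    · simp only [if_neg h]
      have h1 := (tendsto_siteL2 hy h).const_mul (1 / 4 * (d j * d k))
      have e : 1 / 4 * (d j * d k) * (y k - y j)⁻¹ ^ 2 =
          -d j / 2 * (-d k / 2) * (y j - y k)⁻¹ ^ 2 := by
        rw [← neg_sub (y j) (y k), inv_neg]; ring
      rw [e] at h1
      exact h1.congr fun x => by ring

/-- The fusion limit of an antisymmetrized conformal block. -/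
lemma tendsto_cblock_sites (hy : y ∈ chamber (2 * N)) {s d : Fin (2 * N) → ℝ}
    {m : Fin (2 * N) →₀ ℕ} (h : SiteSigns s d m) :
    Tendsto (fun x : Fin (2 * (2 * N)) → ℝ => (∑ ε : Fin (2 * N) → Bool,
        (∏ i, bsign (ε i) ^ m i) * cblock (siteSeq s fun j => bsign (ε j) * d j) x) / fuseDenom x)
      (𝓝[chamber (2 * (2 * N))] dup y)
      (𝓝 (2 ^ (2 * N) * corr s (fun j => -d j / 2) m y 1)) := by
  have hm : ∀ i, m i ≤ 1 := fun i => by rcases h i with h | h <;> omega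
  have h1 := (tendsto_siteV hy s).mul (tendsto_signed_sum hm edgeVec_ne_zero (tendsto_siteGap y)
    (by
      filter_upwards [eventually_chamber y] with x hx i using (siteGap_pos hx i).ne')
    (tendsto_siteTheta hy s d))
  have e : vertexProd s y * (2 ^ (2 * N) * (∏ e, (1 + MvPolynomial.monomial (edgeVec e)
      (edgeWt s (fun j => -d j / 2) y e))).coeff m) =
      2 ^ (2 * N) * corr s (fun j => -d j / 2) m y 1 := by
    rw [corr_apply, genPoly, one_mul]; ring
  rw [e] at h1
  refine h1.congr' ?_
  filter_upwards [eventually_chamber y] with x hx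
  have hden : fuseDenom x = ∏ j, siteGap x j ^ (1 / 2 : ℝ) := rfl
  have hden0 : ∏ j, siteGap x j ^ (1 / 2 : ℝ) ≠ 0 :=
    Finset.prod_ne_zero_iff.2 fun j _ => (Real.rpow_pos_of_pos (siteGap_pos hx j) _).ne'
  rw [hden, eq_div_iff hden0, Finset.mul_sum, Finset.mul_sum, Finset.sum_mul]
  refine Finset.sum_congr rfl fun ε _ => ?_
  rw [cblock_sites h hx]
  ring

lemma neBot_fusion (hy : y ∈ chamber (2 * N)) : (𝓝[chamber (2 * (2 * N))] dup y).NeBot := by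
  rw [← mem_closure_iff_nhdsWithin_neBot]
  -- approach the fusion point by moving apart the two points of each site
  have hpath : Tendsto (fun η : ℝ => fun p : Fin (2 * (2 * N)) => dup y p + η * p.val)
      (𝓝[>] 0) (𝓝 (dup y)) := by
    have hc : Continuous (fun η : ℝ => fun p : Fin (2 * (2 * N)) => dup y p + η * p.val) := by
      fun_prop
    have := hc.tendsto 0
    simp only [zero_mul, add_zero] at this
    exact this.mono_left nhdsWithin_le_nhds
  refine mem_closure_of_tendsto hpath ?_
  filter_upwards [self_mem_nhdsWithin] with η hη
  intro p q hpq
  have hpq' : p.val < q.val := hpq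
  have h1 : dup y p ≤ dup y q := by
    unfold dup
    rcases (Nat.div_le_div_right (c := 2) hpq'.le).lt_or_eq with h | h
    · exact (hy _ _ h).le
    · exact le_of_eq (by congr 1; exact Fin.ext h)
  have h2 : η * (p.val : ℝ) < η * q.val :=
    mul_lt_mul_of_pos_left (by exact_mod_cast hpq') hη
  dsimp only
  linarith

end Limit

/-! ### The fused pure partition functions -/

/-- The charges of a sign sequence given by its two signs at each site. -/
def bCharge {n : ℕ} (b : Fin n → Bool × Bool) (j : Fin n) : ℝ :=
  (bsign (b j).1 + bsign (b j).2) / 2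

/-- The dipoles of a sign sequence given by its two signs at each site. -/
def bDipole {n : ℕ} (b : Fin n → Bool × Bool) (j : Fin n) : ℝ :=
  (bsign (b j).1 - bsign (b j).2) / 2

/-- The indicator of the sites that carry a dipole. -/
def bExp {n : ℕ} (b : Fin n → Bool × Bool) : Fin n →₀ ℕ :=
  Finsupp.equivFunOnFinite.symm fun j => if (b j).1 = (b j).2 then 0 else 1

lemma bExp_apply {n : ℕ} (b : Fin n → Bool × Bool) (j : Fin n) :
    bExp b j = if (b j).1 = (b j).2 then 0 else 1 := rfl

lemma siteSigns_b {n : ℕ} (b : Fin n → Bool × Bool) :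
    SiteSigns (bCharge b) (bDipole b) (bExp b) := by
  intro i
  rw [bExp_apply]
  unfold bCharge bDipole
  rcases b i with ⟨c, d⟩
  cases c <;> cases d <;> norm_num

lemma siteData_b {n : ℕ} (b : Fin n → Bool × Bool) :
    SiteData (bCharge b) (fun j => -bDipole b j / 2) (bExp b) := by
  intro i
  rcases siteSigns_b b i with ⟨h1, h2, h3⟩ | ⟨h1, h2, h3⟩
  · exact Or.inl ⟨by simp [h1], h2, h3⟩
  · exact Or.inr ⟨h1, h3⟩

/-- The sign sequence with the signs `b j` at the site `j`. -/
def bSeq {n : ℕ} (b : Fin n → Bool × Bool) : Fin (2 * n) → ℝ := siteSeq (bCharge b) (bDipole b)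

lemma bSeq_false {n : ℕ} (b : Fin n → Bool × Bool) (j : Fin n) :
    bSeq b (sitePt j false) = bsign (b j).1 := by
  rw [bSeq, siteSeq_pt, bsign_false, bCharge, bDipole]; ring

lemma bSeq_true {n : ℕ} (b : Fin n → Bool × Bool) (j : Fin n) :
    bSeq b (sitePt j true) = bsign (b j).2 := by
  rw [bSeq, siteSeq_pt, bsign_true, bCharge, bDipole]; ring

lemma bsign_decide {r : ℝ} (h : r = 1 ∨ r = -1) : bsign (decide (r = -1)) = r := by
  rcases h with rfl | rfl
  · rw [decide_eq_false (by norm_num), bsign_false]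
  · simp

lemma bsign_injective : Function.Injective bsign := by
  intro a b h
  cases a <;> cases b <;> first | rfl | (norm_num at h)

lemma pureZ_eq_sum {N : ℕ} (α : PlanarPair (2 * N)) (x : Fin (2 * (2 * N)) → ℝ) :
    pureZ α x = ∑ b : Fin (2 * N) → Bool × Bool, signCoeff α (bSeq b) * cblock (bSeq b) x := by
  simp only [signCoeff, Finset.sum_mul]
  rw [Finset.sum_comm, pureZ]
  refine Finset.sum_congr rfl fun β _ => ?_
  set b₀ : Fin (2 * N) → Bool × Bool := fun j =>
    (decide (pairSign β (sitePt j false) = -1), decide (pairSign β (sitePt j true) = -1)) with hb₀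
  have h0 : pairSign β = bSeq b₀ := by
    funext p
    revert p
    refine forall_sites fun j a => ?_
    cases a
    · rw [bSeq_false, bsign_decide (pairSign_eq_one_or β _)]
    · rw [bSeq_true, bsign_decide (pairSign_eq_one_or β _)]
  rw [Finset.sum_eq_single b₀]
  · rw [if_pos h0, ← h0]
  · intro b _ hb
    rw [if_neg, zero_mul]
    intro h
    refine hb (funext fun j => Prod.ext ?_ ?_)
    · refine bsign_injective ?_
      rw [← bSeq_false, ← bSeq_false, ← h, ← h0]
    · refine bsign_injective ?_
      rw [← bSeq_true, ← bSeq_true, ← h, ← h0]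
  · simp

/-- Exchanging the two points at the sites selected by `ε` changes the coefficient of a sign
sequence by the sign of the dipoles at these sites. -/
lemma signCoeff_flip {N : ℕ} {α : PlanarPair (2 * N)} (hα : noFuseLink α)
    {s d : Fin (2 * N) → ℝ} {m : Fin (2 * N) →₀ ℕ} (h : SiteSigns s d m)
    (ε : Fin (2 * N) → Bool) :
    signCoeff α (siteSeq s fun j => bsign (ε j) * d j) =
      (∏ i, bsign (ε i) ^ m i) * signCoeff α (siteSeq s d) := by
  have main : ∀ I : Finset (Fin (2 * N)),
      signCoeff α (siteSeq s fun j => if j ∈ I then bsign (ε j) * d j else d j) =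
      (∏ i ∈ I, bsign (ε i) ^ m i) * signCoeff α (siteSeq s d) := by
    intro I
    induction I using Finset.induction_on with
    | empty => simp
    | insert j I hj ih =>
      rw [Finset.prod_insert hj, mul_assoc, ← ih]
      set D : Fin (2 * N) → ℝ := fun i => if i ∈ I then bsign (ε i) * d i else d i with hD
      have hDj : D j = d j := by simp [hD, hj]
      have hins : ∀ i, (if i ∈ insert j I then bsign (ε i) * d i else d i) =
          if i = j then bsign (ε j) * d j else D i := by
        intro i
        by_cases hi : i = j
        · subst hi; simp
        · simp [hi, hD]
      simp only [hins]
      by_cases htriv : bsign (ε j) * d j = d j ∧ bsign (ε j) ^ m j = 1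
      · rw [htriv.1, htriv.2, one_mul]
        congr 2
        funext i
        split_ifs with hi
        · rw [hi, hDj]
        · rfl
      · have hcase : d j ≠ 0 ∧ bsign (ε j) = -1 ∧ m j = 1 := by
          rcases h j with ⟨h1, h2, h3⟩ | ⟨h1, h2, h3⟩
          · exact absurd ⟨by rw [h1, mul_zero], by rw [h3, pow_zero]⟩ htriv
          · refine ⟨fun h0 => by rw [h0] at h2; norm_num at h2, ?_, h3⟩
            cases hε : ε j
            · exact absurd ⟨by rw [hε, bsign_false, one_mul],
                by rw [hε, bsign_false, one_pow]⟩ htriv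
            · rfl
        obtain ⟨hd, hε, hmj⟩ := hcase
        have hsw := signCoeff_swap α (sitePt j false) (sitePt j true) rfl (hα j) (siteSeq s D) (by
          rw [siteSeq_pt, siteSeq_pt, bsign_true, bsign_false, hDj]
          intro hc
          apply hd
          linarith)
        rw [hmj, pow_one, hε, neg_one_mul, neg_one_mul, ← hsw]
        congr 1
        funext p
        revert p
        refine forall_sites fun k a => ?_
        by_cases hk : k = j
        · subst hk
          cases a
          · rw [Equiv.swap_apply_left, siteSeq_pt, siteSeq_pt, if_pos rfl, hDj]
            simp
          · rw [Equiv.swap_apply_right, siteSeq_pt, siteSeq_pt, if_pos rfl, hDj]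
            simp
        · have hne : ∀ c, sitePt k a ≠ sitePt j c := by
            intro c hc
            have := (siteEquiv (2 * N)).injective (a₁ := (k, a)) (a₂ := (j, c)) hc
            exact hk (congrArg Prod.fst this)
          rw [Equiv.swap_apply_of_ne_of_ne (hne _) (hne _), siteSeq_pt, siteSeq_pt, if_neg hk]
  simpa using main univ

/-- Exchange of the two signs at the sites selected by `ε`. -/
def bFlip {n : ℕ} (ε : Fin n → Bool) : Equiv.Perm (Fin n → Bool × Bool) :=
  Function.Involutive.toPerm (fun b j => if ε j then (b j).swap else b j) (by
    intro b
    funext j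
    by_cases h : ε j <;> simp [h])

lemma bFlip_apply {n : ℕ} (ε : Fin n → Bool) (b : Fin n → Bool × Bool) (j : Fin n) :
    bFlip ε b j = if ε j then (b j).swap else b j := rfl

lemma bSeq_flip {n : ℕ} (ε : Fin n → Bool) (b : Fin n → Bool × Bool) :
    bSeq (bFlip ε b) = siteSeq (bCharge b) fun j => bsign (ε j) * bDipole b j := by
  unfold bSeq
  congr 1
  · funext j
    simp only [bCharge, bFlip_apply]
    cases ε j
    · simp
    · simp [add_comm]
  · funext j
    simp only [bDipole, bFlip_apply]
    cases ε j
    · simp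
    · simp; ring

/-- Averaging over the exchanges antisymmetrizes the conformal blocks. -/
lemma pureZ_eq_average {N : ℕ} {α : PlanarPair (2 * N)} (hα : noFuseLink α)
    (x : Fin (2 * (2 * N)) → ℝ) :
    2 ^ (2 * N) * pureZ α x = ∑ b : Fin (2 * N) → Bool × Bool, signCoeff α (bSeq b) *
      ∑ ε : Fin (2 * N) → Bool, (∏ i, bsign (ε i) ^ bExp b i) *
        cblock (siteSeq (bCharge b) fun j => bsign (ε j) * bDipole b j) x := by
  have h1 : ∀ ε : Fin (2 * N) → Bool, pureZ α x = ∑ b : Fin (2 * N) → Bool × Bool,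
      signCoeff α (bSeq b) * ((∏ i, bsign (ε i) ^ bExp b i) *
        cblock (siteSeq (bCharge b) fun j => bsign (ε j) * bDipole b j) x) := by
    intro ε
    rw [pureZ_eq_sum, ← Equiv.sum_comp (bFlip ε)]
    refine Finset.sum_congr rfl fun b _ => ?_
    rw [bSeq_flip, signCoeff_flip hα (siteSigns_b b), bSeq]
    ring
  have h2 : 2 ^ (2 * N) * pureZ α x = ∑ _ε : Fin (2 * N) → Bool, pureZ α x := by
    simp
  rw [h2, Finset.sum_congr rfl fun ε _ => h1 ε, Finset.sum_comm]
  simp only [Finset.mul_sum]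

/-- The fusion limit as a combination of fused conformal blocks. -/
lemma fusedZ_eq {N : ℕ} {α : PlanarPair (2 * N)} (hα : noFuseLink α) {y : Fin (2 * N) → ℝ}
    (hy : y ∈ chamber (2 * N)) :
    fusedZ α y = ∑ b : Fin (2 * N) → Bool × Bool, signCoeff α (bSeq b) *
      corr (bCharge b) (fun j => -bDipole b j / 2) (bExp b) y 1 := by
  have := neBot_fusion hy
  refine Tendsto.limUnder_eq ?_
  have h1 := (tendsto_finsetSum (univ : Finset (Fin (2 * N) → Bool × Bool)) fun b _ =>
    (tendsto_cblock_sites hy (siteSigns_b b)).const_mul (signCoeff α (bSeq b))).const_mul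
      ((2 ^ (2 * N) : ℝ)⁻¹)
  have h2 : (2 ^ (2 * N) : ℝ) ≠ 0 := by positivity
  have e : (2 ^ (2 * N) : ℝ)⁻¹ * ∑ b : Fin (2 * N) → Bool × Bool, signCoeff α (bSeq b) *
      (2 ^ (2 * N) * corr (bCharge b) (fun j => -bDipole b j / 2) (bExp b) y 1) =
      ∑ b : Fin (2 * N) → Bool × Bool, signCoeff α (bSeq b) *
      corr (bCharge b) (fun j => -bDipole b j / 2) (bExp b) y 1 := by
    rw [Finset.mul_sum]
    refine Finset.sum_congr rfl fun b _ => ?_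
    field_simp
  rw [e] at h1
  refine h1.congr fun x => ?_
  have h3 : pureZ α x / fuseDenom x =
      (2 ^ (2 * N) : ℝ)⁻¹ * (2 ^ (2 * N) * pureZ α x / fuseDenom x) := by
    field_simp
  rw [h3, pureZ_eq_average hα, Finset.sum_div]
  congr 1
  exact Finset.sum_congr rfl fun b _ => by ring

/-! ### Linearity of the differential operator -/

lemma contDiffOn_pd {n : ℕ} {f : (Fin n → ℝ) → ℝ}
    (hf : ContDiffOn ℝ (⊤ : ℕ∞) f (chamber n)) (i : Fin n) :
    ContDiffOn ℝ (⊤ : ℕ∞) (pd i f) (chamber n) :=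
  (hf.fderiv_of_isOpen (isOpen_chamber n) (by simp)).clm_apply contDiffOn_const

lemma pd_sum {n : ℕ} {κ : Type*} [Fintype κ] (c : κ → ℝ) {f : κ → (Fin n → ℝ) → ℝ}
    (hf : ∀ b, ContDiffOn ℝ (⊤ : ℕ∞) (f b) (chamber n)) (i : Fin n) {y : Fin n → ℝ}
    (hy : y ∈ chamber n) :
    pd i (fun z => ∑ b, c b * f b z) y = ∑ b, c b * pd i (f b) y := by
  have hd : ∀ b, DifferentiableAt ℝ (f b) y := fun b =>
    ((hf b).contDiffAt ((isOpen_chamber n).mem_nhds hy)).differentiableAt (by simp)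
  unfold pd
  rw [fderiv_fun_sum fun b _ => (hd b).const_mul (c b), _root_.sum_apply]
  refine Finset.sum_congr rfl fun b _ => ?_
  rw [fderiv_const_mul (hd b)]
  rfl

lemma thirdOrderOp_sum {n : ℕ} {κ : Type*} [Fintype κ] (c : κ → ℝ) {f : κ → (Fin n → ℝ) → ℝ}
    (hf : ∀ b, ContDiffOn ℝ (⊤ : ℕ∞) (f b) (chamber n)) {F : (Fin n → ℝ) → ℝ}
    (hF : ∀ z ∈ chamber n, F z = ∑ b, c b * f b z) (j : Fin n) {y : Fin n → ℝ}
    (hy : y ∈ chamber n) :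
    thirdOrderOp j F y = ∑ b, c b * thirdOrderOp j (f b) y := by
  have h1 : ∀ i, ∀ z ∈ chamber n, pd i F z = ∑ b, c b * pd i (f b) z := fun i z hz => by
    rw [pd_congr hF i hz, pd_sum c hf i hz]
  have h2 : ∀ i, ∀ z ∈ chamber n, pd i (pd j F) z = ∑ b, c b * pd i (pd j (f b)) z :=
    fun i z hz => by
      rw [pd_congr (h1 j) i hz, pd_sum c (fun b => contDiffOn_pd (hf b) j) i hz]
  have h3 : pd j (pd j (pd j F)) y = ∑ b, c b * pd j (pd j (pd j (f b))) y := by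
    rw [pd_congr (h2 j) j hy,
      pd_sum c (fun b => contDiffOn_pd (contDiffOn_pd (hf b) j) j) j hy]
  simp only [thirdOrderOp, mul_add, mul_sub, Finset.sum_add_distrib, Finset.sum_sub_distrib, h3]
  have e1 : ∑ i ∈ univ.filter (fun i : Fin n => i ≠ j), pd j F y / (y i - y j) ^ 2 =
      ∑ b, c b * ∑ i ∈ univ.filter (fun i : Fin n => i ≠ j), pd j (f b) y / (y i - y j) ^ 2 := by
    simp only [Finset.mul_sum]
    rw [Finset.sum_comm]
    refine Finset.sum_congr rfl fun i _ => ?_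
    rw [h1 j y hy, Finset.sum_div]
    exact Finset.sum_congr rfl fun b _ => by ring
  have e2 : ∑ i ∈ univ.filter (fun i : Fin n => i ≠ j), pd i (pd j F) y / (y i - y j) =
      ∑ b, c b * ∑ i ∈ univ.filter (fun i : Fin n => i ≠ j),
        pd i (pd j (f b)) y / (y i - y j) := by
    simp only [Finset.mul_sum]
    rw [Finset.sum_comm]
    refine Finset.sum_congr rfl fun i _ => ?_
    rw [h2 i y hy, Finset.sum_div]
    exact Finset.sum_congr rfl fun b _ => by ring
  have e3 : ∑ i ∈ univ.filter (fun i : Fin n => i ≠ j), 2 * F y / (y i - y j) ^ 3 =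
      ∑ b, c b * ∑ i ∈ univ.filter (fun i : Fin n => i ≠ j), 2 * f b y / (y i - y j) ^ 3 := by
    simp only [Finset.mul_sum]
    rw [Finset.sum_comm]
    refine Finset.sum_congr rfl fun i _ => ?_
    rw [hF y hy, Finset.mul_sum, Finset.sum_div]
    exact Finset.sum_congr rfl fun b _ => by ring
  have e4 : ∑ i ∈ univ.filter (fun i : Fin n => i ≠ j), pd i F y / (y i - y j) ^ 2 =
      ∑ b, c b * ∑ i ∈ univ.filter (fun i : Fin n => i ≠ j), pd i (f b) y / (y i - y j) ^ 2 := by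
    simp only [Finset.mul_sum]
    rw [Finset.sum_comm]
    refine Finset.sum_congr rfl fun i _ => ?_
    rw [h1 i y hy, Finset.sum_div]
    exact Finset.sum_congr rfl fun b _ => by ring
  rw [e1, e2, e3, e4]
  simp only [Finset.mul_sum (s := (univ : Finset κ)), mul_left_comm (c _)]

/-- The fused pure partition function is smooth on the chamber and
satisfies the third-order PDE system (κ = 4, H = 1). -/
theorem fusedZ_smooth_and_thirdOrderPDE (N : ℕ) (hN : 1 ≤ N)
    (α : PlanarPair (2 * N)) (hα : noFuseLink α) :
    ContDiffOn ℝ (⊤ : ℕ∞) (fusedZ α) (chamber (2 * N)) ∧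
    ∀ j : Fin (2 * N), ∀ y ∈ chamber (2 * N),
      pd j (pd j (pd j (fusedZ α))) y
        - 4 * ∑ i ∈ univ.filter (fun i : Fin (2 * N) => i ≠ j),
            (pd j (fusedZ α) y / (y i - y j) ^ 2 -
              pd i (pd j (fusedZ α)) y / (y i - y j))
        + 2 * ∑ i ∈ univ.filter (fun i : Fin (2 * N) => i ≠ j),
            (2 * fusedZ α y / (y i - y j) ^ 3 -
              pd i (fusedZ α) y / (y i - y j) ^ 2) = 0 := by
  have hsm : ∀ b : Fin (2 * N) → Bool × Bool, ContDiffOn ℝ (⊤ : ℕ∞)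
      (fun z => corr (bCharge b) (fun j => -bDipole b j / 2) (bExp b) z 1) (chamber (2 * N)) :=
    fun b => contDiffOn_corr _ _ _ (CoeffSmooth.const 1)
  have hF : ∀ z ∈ chamber (2 * N), fusedZ α z = ∑ b : Fin (2 * N) → Bool × Bool,
      signCoeff α (bSeq b) * corr (bCharge b) (fun j => -bDipole b j / 2) (bExp b) z 1 :=
    fun z hz => fusedZ_eq hα hz
  refine ⟨?_, fun j y hy => ?_⟩
  · exact (ContDiffOn.sum fun b _ => contDiffOn_const.mul (hsm b)).congr hF
  · have h := thirdOrderOp_sum _ hsm hF j hy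
    rw [Finset.sum_eq_zero fun b _ => by rw [thirdOrderOp_corr (siteData_b b) j hy, mul_zero]] at h
    exact h
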